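/- arXiv:1310.7260 — 2 statements merged into one kernel-verified Lean document; each statement's English description precedes it below -/
import Mathlib

section
/- The laws of V_n := (1/n) ∑_{i=1}^n 1_{X_i is square-free} satisfy a large deviation principle with speed n and rate function I(x) = x·log(x/(6/π²)) + (1−x)·log((1−x)/(1−6/π²)) for x ∈ [0,1] (with the conventions 0·log 0 = 0, and I(x) = +∞ for x ∉ [0,1]): for every Borel set A ⊆ ℝ, −inf_{x∈A°} I(x) ≤ liminf_{n→∞} (1/n) log P(V_n ∈ A) ≤ limsup_{n→∞} (1/n) log P(V_n ∈ A) ≤ −inf_{x∈closure(A)} I(x). -/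
open MeasureTheory ProbabilityTheory Filter Real

/-- The joint law of `n` i.i.d. random variables, each uniformly distributed on
`{1, 2, …, n}` (the coordinates `ω ↦ ω i` are the random variables `X_i`). -/
noncomputable def unifVec (n : ℕ) : Measure (Fin n → ℕ) :=
  Measure.pi fun _ => uniformOn (Set.Icc 1 n)

/-- The rate function `I(x) = x log(x/(6/π²)) + (1−x) log((1−x)/(1−6/π²))` on
`[0,1]`, equal to `+∞` outside `[0,1]`.  (Note that in Lean `0 * Real.log 0 = 0`
automatically, which realizes the convention `0·log 0 = 0`.) -/
noncomputable def squarefreeRate (x : ℝ) : EReal :=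
  if 0 ≤ x ∧ x ≤ 1 then
    ((x * Real.log (x / (6 / π ^ 2)) +
      (1 - x) * Real.log ((1 - x) / (1 - 6 / π ^ 2)) : ℝ) : EReal)
  else ⊤

/-!
The number of square-free coordinates is a binomial variable whose success probability
`q n = n⁻¹ ∑_{d ≤ n} μ(d) ⌊n / d²⌋` tends to `∑ μ(d) / d² = 1 / ζ(2) = 6 / π²` by dominated
convergence.

For `0 < p < 1` and `k = n x`, changing the parameter from `p` to `x` gives
`Bin(n, p) {k} = exp (-n KL(x ‖ p)) Bin(n, x) {k}`. Since `k` is the mode of `Bin(n, x)`, the last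
factor lies between `1 / (n + 1)` and `1`. A set of values of `k` contains at most `n + 1` atoms, so
on the exponential scale its probability is governed by the smallest relative entropy. The drift of
`q n` is harmless because the relative entropy is continuous in `p`, uniformly in `x`.
-/

open ArithmeticFunction (moebius)
open scoped Finset Topology unitInterval Nat

lemma dvd_of_sq_dvd_sq_mul_squarefree {a b d : ℕ} (ha : Squarefree a) (hb : b ≠ 0)
    (h : d ^ 2 ∣ b ^ 2 * a) : d ∣ b := by
  obtain ⟨g, d', b', hg, hcop, rfl, rfl⟩ :=
    Nat.exists_coprime' (Nat.gcd_pos_of_pos_right d (Nat.pos_of_ne_zero hb))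
  have hd'a : d' ^ 2 ∣ a := by
    rw [mul_pow, mul_pow, mul_right_comm, Nat.mul_dvd_mul_iff_right (by positivity)] at h
    exact (hcop.pow 2 2).dvd_of_dvd_mul_left h
  have hd' : d' = 1 := Nat.isUnit_iff.1 (ha d' (by rwa [← sq]))
  simp [hd']

lemma filter_sq_dvd_eq_divisors {a b n : ℕ} (ha : Squarefree a) (hb : b ≠ 0) (hbn : b ≤ n) :
    {d ∈ Finset.Icc 1 n | d ^ 2 ∣ b ^ 2 * a} = b.divisors := by
  ext d
  simp only [Finset.mem_filter, Finset.mem_Icc, Nat.mem_divisors]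
  constructor
  · rintro ⟨-, h⟩
    exact ⟨dvd_of_sq_dvd_sq_mul_squarefree ha hb h, hb⟩
  · rintro ⟨h, -⟩
    exact ⟨⟨Nat.pos_of_dvd_of_pos h (Nat.pos_of_ne_zero hb),
      (Nat.le_of_dvd (Nat.pos_of_ne_zero hb) h).trans hbn⟩, (pow_dvd_pow_of_dvd h 2).mul_right a⟩

lemma sum_moebius_sq_dvd_eq_ite_squarefree {k n : ℕ} (hk : k ≠ 0) (hkn : k ≤ n) :
    ∑ d ∈ Finset.Icc 1 n with d ^ 2 ∣ k, moebius d = if Squarefree k then 1 else 0 := by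
  obtain ⟨a, b, rfl, ha⟩ := Nat.sq_mul_squarefree k
  have hb : b ≠ 0 := by rintro rfl; simp at hk
  have hbn : b ≤ n := (Nat.le_of_dvd (Nat.pos_of_ne_zero hk)
    ((dvd_pow_self b two_ne_zero).mul_right a)).trans hkn
  have hsq : Squarefree (b ^ 2 * a) ↔ b = 1 :=
    ⟨fun h ↦ Nat.isUnit_iff.1 (h b ⟨a, by ring⟩), fun h ↦ by simpa [h] using ha⟩
  rw [filter_sq_dvd_eq_divisors ha hb hbn, ← ArithmeticFunction.coe_mul_zeta_apply,
    ArithmeticFunction.moebius_mul_coe_zeta, ArithmeticFunction.one_apply]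
  exact if_congr hsq.symm rfl rfl

lemma card_squarefree_eq_sum_moebius (n : ℕ) :
    (#{k ∈ Finset.Icc 1 n | Squarefree k} : ℤ) =
      ∑ d ∈ Finset.Icc 1 n, moebius d * ((n / d ^ 2 : ℕ) : ℤ) := by
  have hcard (d : ℕ) : #{k ∈ Finset.Icc 1 n | d ^ 2 ∣ k} = n / d ^ 2 :=
    Nat.Ioc_filter_dvd_card_eq_div n (d ^ 2)
  calc (#{k ∈ Finset.Icc 1 n | Squarefree k} : ℤ)
      = ∑ k ∈ Finset.Icc 1 n, if Squarefree k then 1 else 0 := by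
        simp only [Finset.card_filter, Nat.cast_sum, Nat.cast_ite, Nat.cast_one, Nat.cast_zero]
    _ = ∑ k ∈ Finset.Icc 1 n, ∑ d ∈ Finset.Icc 1 n, if d ^ 2 ∣ k then moebius d else 0 := by
        refine Finset.sum_congr rfl fun k hk ↦ ?_
        have hk := Finset.mem_Icc.1 hk
        rw [← Finset.sum_filter, sum_moebius_sq_dvd_eq_ite_squarefree (by lia) hk.2]
    _ = ∑ d ∈ Finset.Icc 1 n, moebius d * ((n / d ^ 2 : ℕ) : ℤ) := by
        rw [Finset.sum_comm]
        refine Finset.sum_congr rfl fun d _ ↦ ?_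
        rw [← Finset.sum_filter, Finset.sum_const, hcard, nsmul_eq_mul, mul_comm]

lemma tsum_moebius_div_sq : ∑' d : ℕ, (moebius d : ℝ) / (d : ℝ) ^ 2 = 6 / π ^ 2 := by
  have hL : LSeries (fun n ↦ ((moebius n : ℤ) : ℂ)) 2 =
      ((∑' d : ℕ, (moebius d : ℝ) / (d : ℝ) ^ 2 : ℝ) : ℂ) := by
    rw [LSeries, Complex.ofReal_tsum]
    refine tsum_congr fun d ↦ ?_
    rw [LSeries.term_def]
    split_ifs with h
    · simp [h]
    · push_cast
      exact congrArg _ (Complex.cpow_ofNat _ _)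
  have hmul := ArithmeticFunction.LSeries_zeta_mul_Lseries_moebius (s := 2) (by norm_num)
  rw [ArithmeticFunction.LSeries_zeta_eq_riemannZeta (by norm_num), riemannZeta_two, hL] at hmul
  have hmul' : π ^ 2 / 6 * (∑' d : ℕ, (moebius d : ℝ) / (d : ℝ) ^ 2) = 1 := by exact_mod_cast hmul
  rw [eq_div_iff (by positivity)]
  linarith

lemma tendsto_natDiv_div_natCast (m : ℕ) :
    Tendsto (fun n : ℕ ↦ ((n / m : ℕ) : ℝ) / n) atTop (𝓝 (m : ℝ)⁻¹) := by
  refine ((tendsto_nat_floor_mul_div_atTop (R := ℝ) (a := (m : ℝ)⁻¹) (by positivity)).comp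
    tendsto_natCast_atTop_atTop).congr fun n ↦ ?_
  rw [Function.comp_apply, mul_comm, ← div_eq_mul_inv, Nat.floor_div_eq_div]

lemma natDiv_div_natCast_le (n m : ℕ) : ((n / m : ℕ) : ℝ) / n ≤ (m : ℝ)⁻¹ := by
  rcases eq_or_ne n 0 with rfl | hn
  · simp
  · rw [div_le_iff₀ (by positivity), mul_comm, ← div_eq_mul_inv]
    exact Nat.cast_div_le

lemma card_squarefree_div_eq_tsum (n : ℕ) :
    (#{k ∈ Finset.Icc 1 n | Squarefree k} : ℝ) / n =
      ∑' d : ℕ, (moebius d : ℝ) * (((n / d ^ 2 : ℕ) : ℝ) / n) := by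
  rw [tsum_eq_sum (s := Finset.Icc 1 n)]
  · have hcard : (#{k ∈ Finset.Icc 1 n | Squarefree k} : ℝ) =
        ∑ d ∈ Finset.Icc 1 n, (moebius d : ℝ) * ((n / d ^ 2 : ℕ) : ℝ) := by
      simpa only [Int.cast_natCast, Int.cast_sum, Int.cast_mul] using
        congrArg (Int.cast : ℤ → ℝ) (card_squarefree_eq_sum_moebius n)
    simp only [hcard, Finset.sum_div, mul_div_assoc]
  · intro d hd
    rcases eq_or_ne d 0 with rfl | hd0
    · simp
    · have hnd : n < d := by simp only [Finset.mem_Icc, not_and, not_le] at hd; lia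
      simp [Nat.div_eq_of_lt (hnd.trans_le (Nat.le_self_pow two_ne_zero d))]

theorem tendsto_card_squarefree_div :
    Tendsto (fun n : ℕ ↦ (#{k ∈ Finset.Icc 1 n | Squarefree k} : ℝ) / n) atTop
      (𝓝 (6 / π ^ 2)) := by
  simp_rw [← tsum_moebius_div_sq, card_squarefree_div_eq_tsum, div_eq_mul_inv (moebius _ : ℝ)]
  refine tendsto_tsum_of_dominated_convergence (bound := fun d : ℕ ↦ ((d : ℝ) ^ 2)⁻¹)
    (Real.summable_nat_pow_inv.2 one_lt_two) (fun d ↦ ?_) (Eventually.of_forall fun n d ↦ ?_)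
  · exact_mod_cast (tendsto_natDiv_div_natCast (d ^ 2)).const_mul (moebius d : ℝ)
  · have hmoebius : |(moebius d : ℝ)| ≤ 1 := by
      exact_mod_cast ArithmeticFunction.abs_moebius_le_one
    have hdiv : ((n / d ^ 2 : ℕ) : ℝ) / n ≤ ((d : ℝ) ^ 2)⁻¹ := by
      exact_mod_cast natDiv_div_natCast_le n (d ^ 2)
    rw [norm_mul, norm_eq_abs, norm_of_nonneg (by positivity)]
    exact (mul_le_of_le_one_left (by positivity) hmoebius).trans hdiv

lemma six_div_pi_sq_mem_Ioo : 6 / π ^ 2 ∈ Set.Ioo (0 : ℝ) 1 := by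
  refine ⟨by positivity, (div_lt_one (by positivity)).2 ?_⟩
  nlinarith [pi_gt_three]

/-- Relative entropy of the Bernoulli law of parameter `x` with respect to the one of parameter
`p`. The junk values of `log` and division encode `0 log 0 = 0`. -/
noncomputable def bernoulliKL (p x : ℝ) : ℝ :=
  x * log (x / p) + (1 - x) * log ((1 - x) / (1 - p))

/-- Cramér rate function of Bernoulli variables of parameter `p`: the relative entropy on `[0, 1]`,
extended by `⊤`. -/
noncomputable def bernoulliRate (p x : ℝ) : EReal :=
  if 0 ≤ x ∧ x ≤ 1 then (bernoulliKL p x : EReal) else ⊤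

section

variable {p q x : ℝ}

lemma mul_log_div_eq (hp : p ≠ 0) : x * log (x / p) = -negMulLog x - x * log p := by
  rcases eq_or_ne x 0 with rfl | hx
  · simp
  · rw [log_div hx hp, negMulLog]; ring

lemma bernoulliKL_eq_neg_binEntropy_sub (hp : p ∈ Set.Ioo 0 1) :
    bernoulliKL p x = -binEntropy x - x * log p - (1 - x) * log (1 - p) := by
  rw [bernoulliKL, mul_log_div_eq hp.1.ne', mul_log_div_eq (sub_pos.2 hp.2).ne',
    binEntropy_eq_negMulLog_add_negMulLog_one_sub]
  ring

lemma bernoulliRate_of_mem (hx : x ∈ I) : bernoulliRate p x = bernoulliKL p x :=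
  if_pos hx

lemma bernoulliRate_of_notMem (hx : x ∉ I) : bernoulliRate p x = ⊤ :=
  if_neg hx

lemma bernoulliKL_sub_le (hp : p ∈ Set.Ioo 0 1) (hq : q ∈ Set.Ioo 0 1) (hx : x ∈ Set.Icc 0 1) :
    bernoulliKL p x - bernoulliKL q x ≤ |log q - log p| + |log (1 - q) - log (1 - p)| := by
  calc bernoulliKL p x - bernoulliKL q x
      = x * (log q - log p) + (1 - x) * (log (1 - q) - log (1 - p)) := by
        rw [bernoulliKL_eq_neg_binEntropy_sub hp, bernoulliKL_eq_neg_binEntropy_sub hq]; ring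
    _ ≤ x * |log q - log p| + (1 - x) * |log (1 - q) - log (1 - p)| := by
        gcongr
        exacts [hx.1, le_abs_self _, sub_nonneg.2 hx.2, le_abs_self _]
    _ ≤ |log q - log p| + |log (1 - q) - log (1 - p)| := by
        gcongr
        exacts [mul_le_of_le_one_left (abs_nonneg _) hx.2,
          mul_le_of_le_one_left (abs_nonneg _) (sub_le_self 1 hx.1)]

lemma tendsto_bernoulliKL {ι : Type*} {l : Filter ι} {r y : ι → ℝ} (hp : p ∈ Set.Ioo 0 1)
    (hr : Tendsto r l (𝓝 p)) (hy : Tendsto y l (𝓝 x)) :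
    Tendsto (fun i ↦ bernoulliKL (r i) (y i)) l (𝓝 (bernoulliKL p x)) := by
  have hlog := hr.log hp.1.ne'
  have hlog' := (hr.const_sub 1).log (sub_pos.2 hp.2).ne'
  rw [bernoulliKL_eq_neg_binEntropy_sub hp]
  refine ((((binEntropy_continuous.tendsto x).comp hy).neg.sub (hy.mul hlog)).sub
    ((hy.const_sub 1).mul hlog')).congr' ?_
  filter_upwards [hr.eventually (isOpen_Ioo.mem_nhds hp)] with i hi
  exact (bernoulliKL_eq_neg_binEntropy_sub hi).symm

lemma tendsto_abs_log_sub_add_abs_log_one_sub_sub {ι : Type*} {l : Filter ι} {r : ι → ℝ}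
    (hp : p ∈ Set.Ioo 0 1) (hr : Tendsto r l (𝓝 p)) :
    Tendsto (fun i ↦ |log (r i) - log p| + |log (1 - r i) - log (1 - p)|) l (𝓝 0) := by
  have hlog := ((hr.log hp.1.ne').sub_const (log p)).abs
  have hlog' := (((hr.const_sub 1).log (sub_pos.2 hp.2).ne').sub_const (log (1 - p))).abs
  simpa using hlog.add hlog'

end

lemma factorial_mul_pow_le_factorial_mul_pow_self (j k : ℕ) : k ! * k ^ j ≤ j ! * k ^ k := by
  rcases le_total k j with h | h
  · calc k ! * k ^ j = k ! * k ^ (j - k) * k ^ k := by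
          rw [mul_assoc, ← pow_add, Nat.sub_add_cancel h]
      _ ≤ j ! * k ^ k := by gcongr; exact Nat.factorial_mul_pow_sub_le_factorial h
  · calc k ! * k ^ j = j ! * k.descFactorial (k - j) * k ^ j := by
          rw [← Nat.factorial_mul_descFactorial (Nat.sub_le k j), Nat.sub_sub_self h]
      _ ≤ j ! * k ^ (k - j) * k ^ j := by gcongr; exact Nat.descFactorial_le_pow _ _
      _ = j ! * k ^ k := by rw [mul_assoc, ← pow_add, Nat.sub_add_cancel h]

lemma choose_mul_pow_mul_pow_le_self {n j k : ℕ} (hj : j ≤ n) (hk : k ≤ n) :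
    n.choose j * k ^ j * (n - k) ^ (n - j) ≤ n.choose k * k ^ k * (n - k) ^ (n - k) := by
  have hpos : 0 < k ! * (n - k)! * (j ! * (n - j)!) := by positivity
  refine Nat.le_of_mul_le_mul_left ?_ hpos
  calc k ! * (n - k)! * (j ! * (n - j)!) * (n.choose j * k ^ j * (n - k) ^ (n - j))
      = n.choose j * j ! * (n - j)! * ((k ! * k ^ j) * ((n - k)! * (n - k) ^ (n - j))) := by ring
    _ ≤ n.choose j * j ! * (n - j)! * ((j ! * k ^ k) * ((n - j)! * (n - k) ^ (n - k))) := by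
        exact Nat.mul_le_mul_left _ (Nat.mul_le_mul
          (factorial_mul_pow_le_factorial_mul_pow_self _ _)
          (factorial_mul_pow_le_factorial_mul_pow_self _ _))
    _ = n.choose k * k ! * (n - k)! * ((j ! * k ^ k) * ((n - j)! * (n - k) ^ (n - k))) := by
        rw [Nat.choose_mul_factorial_mul_factorial hj, Nat.choose_mul_factorial_mul_factorial hk]
    _ = k ! * (n - k)! * (j ! * (n - j)!) * (n.choose k * k ^ k * (n - k) ^ (n - k)) := by ring

section

variable {n k : ℕ} {p x : I}

lemma binomial_real_singleton_le_of_eq_mul (hk : (k : ℝ) = n * x) {j : ℕ} (hj : j ≤ n) :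
    Bin(n, x).real {j} ≤ Bin(n, x).real {k} := by
  have hkn : k ≤ n := by
    exact_mod_cast hk.trans_le (mul_le_of_le_one_right (by positivity) x.2.2)
  have hscale {i : ℕ} (hi : i ≤ n) : (n : ℝ) ^ n * Bin(n, x).real {i} =
      (n.choose i * k ^ i * (n - k) ^ (n - i) : ℕ) := by
    rw [binomial_real_singleton]
    push_cast [Nat.cast_sub hkn]
    rw [hk, ← mul_one_sub, mul_pow, mul_pow, ← Nat.add_sub_cancel' hi, pow_add,
      Nat.add_sub_cancel' hi]
    ring
  rcases n.eq_zero_or_pos with rfl | hn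
  · rw [Nat.le_zero.1 hj, Nat.le_zero.1 hkn]
  refine le_of_mul_le_mul_left ?_ (by positivity : (0 : ℝ) < n ^ n)
  rw [hscale hj, hscale hkn]
  exact_mod_cast choose_mul_pow_mul_pow_le_self hj hkn

lemma sum_binomial_real_singleton (n : ℕ) (p : I) :
    ∑ k ∈ Finset.range (n + 1), Bin(n, p).real {k} = 1 := by
  simp_rw [binomial_real_singleton]
  calc ∑ k ∈ Finset.range (n + 1), (n.choose k : ℝ) * p ^ k * (1 - p) ^ (n - k)
      = ((p : ℝ) + (1 - p)) ^ n := by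
        rw [add_pow]; exact Finset.sum_congr rfl fun k _ ↦ by ring
    _ = 1 := by rw [add_sub_cancel, one_pow]

lemma one_le_succ_mul_binomial_real_singleton (hk : (k : ℝ) = n * x) :
    1 ≤ (n + 1) * Bin(n, x).real {k} := by
  calc 1 = ∑ j ∈ Finset.range (n + 1), Bin(n, x).real {j} :=
        (sum_binomial_real_singleton n x).symm
    _ ≤ #(Finset.range (n + 1)) • Bin(n, x).real {k} :=
        Finset.sum_le_card_nsmul _ _ _ fun j hj ↦
          binomial_real_singleton_le_of_eq_mul hk (Finset.mem_range_succ_iff.1 hj)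
    _ = (n + 1) * Bin(n, x).real {k} := by simp

lemma pow_eq_exp_mul_pow {a b : ℝ} {m : ℕ} (ha : 0 < a) (hb : 0 ≤ b) (h : b = 0 → m = 0) :
    a ^ m = exp (-(m * log (b / a))) * b ^ m := by
  rcases hb.eq_or_lt with rfl | hb
  · simp [h rfl]
  · rw [← mul_neg, ← log_inv, inv_div, exp_nat_mul, exp_log (by positivity), ← mul_pow,
      div_mul_cancel₀ _ hb.ne']

lemma binomial_real_singleton_eq_exp_mul (hp : (p : ℝ) ∈ Set.Ioo 0 1) (hk : (k : ℝ) = n * x) :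
    Bin(n, p).real {k} = exp (-(n * bernoulliKL p x)) * Bin(n, x).real {k} := by
  have hkn : k ≤ n := by
    exact_mod_cast hk.trans_le (mul_le_of_le_one_right (by positivity) x.2.2)
  have hnk : ((n - k : ℕ) : ℝ) = n * (1 - x) := by rw [Nat.cast_sub hkn, hk]; ring
  have hpow := pow_eq_exp_mul_pow (m := k) hp.1 x.2.1 fun h ↦ by simpa [h] using hk
  have hpow' := pow_eq_exp_mul_pow (m := n - k) (sub_pos.2 hp.2) (sub_nonneg.2 x.2.2)
    fun h ↦ by simpa only [h, mul_zero, Nat.cast_eq_zero] using hnk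
  have hexp : exp (-(n * bernoulliKL p x)) =
      exp (-(k * log (x / p))) * exp (-((n - k : ℕ) * log ((1 - x) / (1 - p)))) := by
    rw [← exp_add, hk, hnk, bernoulliKL]; ring_nf
  rw [binomial_real_singleton, binomial_real_singleton, hpow, hpow', hexp]
  ring

lemma binomial_real_singleton_le_exp (hp : (p : ℝ) ∈ Set.Ioo 0 1) (hk : (k : ℝ) = n * x) :
    Bin(n, p).real {k} ≤ exp (-(n * bernoulliKL p x)) := by
  rw [binomial_real_singleton_eq_exp_mul hp hk]
  exact mul_le_of_le_one_right (exp_pos _).le measureReal_le_one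

lemma exp_le_succ_mul_binomial_real_singleton (hp : (p : ℝ) ∈ Set.Ioo 0 1)
    (hk : (k : ℝ) = n * x) :
    exp (-(n * bernoulliKL p x)) ≤ (n + 1) * Bin(n, p).real {k} := by
  rw [binomial_real_singleton_eq_exp_mul hp hk, mul_left_comm]
  exact le_mul_of_one_le_right (exp_pos _).le (one_le_succ_mul_binomial_real_singleton hk)

end

lemma binomial_real_le_sum (n : ℕ) (p : I) (B : Set ℕ) [DecidablePred (· ∈ B)] :
    Bin(n, p).real B ≤ ∑ k ∈ Finset.range (n + 1) with k ∈ B, Bin(n, p).real {k} := by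
  have hle : ∀ᵐ k ∂Bin(n, p), k ≤ n := ae_le_of_hasLaw_binomial .id
  rw [sum_measureReal_singleton]
  refine ENNReal.toReal_mono (measure_ne_top _ _) (measure_mono_ae ?_)
  filter_upwards [hle] with k hk hkB
  simpa using ⟨hk, hkB⟩

section

variable {n : ℕ} {p : I} {B : Set ℕ} {c : ℝ}

lemma inv_mul_log_ofReal_exp (hn : n ≠ 0) (a : ℝ) :
    (((n : ℝ)⁻¹ : ℝ) : EReal) * ENNReal.log (ENNReal.ofReal (exp (n * a))) = a := by
  rw [ENNReal.log_ofReal_of_pos (exp_pos _), log_exp, ← EReal.coe_mul,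
    inv_mul_cancel_left₀ (by positivity)]

lemma inv_mul_log_le_inv_mul_log {m m' : ENNReal} (h : m ≤ m') :
    (((n : ℝ)⁻¹ : ℝ) : EReal) * ENNReal.log m ≤ (((n : ℝ)⁻¹ : ℝ) : EReal) * ENNReal.log m' :=
  mul_le_mul_of_nonneg_left (ENNReal.log_le_log h) (EReal.coe_nonneg.2 (by positivity))

lemma exp_mul_inv_mul_log_succ (hn : n ≠ 0) : exp (n * ((n : ℝ)⁻¹ * log (n + 1))) = n + 1 := by
  rw [mul_inv_cancel_left₀ (by positivity), exp_log (by positivity)]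

lemma natCast_div_mem_unitInterval {k : ℕ} (hkn : k ≤ n) : (k : ℝ) / n ∈ I :=
  ⟨by positivity, div_le_one_of_le₀ (by exact_mod_cast hkn) (by positivity)⟩

lemma neg_bernoulliKL_sub_le_inv_mul_log_binomial (hn : n ≠ 0) (hp : (p : ℝ) ∈ Set.Ioo 0 1)
    {k : ℕ} (hkn : k ≤ n) (hkB : k ∈ B) :
    ((-bernoulliKL p (k / n) - (n : ℝ)⁻¹ * log (n + 1) : ℝ) : EReal) ≤
      (((n : ℝ)⁻¹ : ℝ) : EReal) * ENNReal.log (Bin(n, p) B) := by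
  have hk : (k : ℝ) = n * (k / n) := by field_simp
  have hpoint := exp_le_succ_mul_binomial_real_singleton (n := n)
    (x := ⟨k / n, natCast_div_mem_unitInterval hkn⟩) hp hk
  rw [← inv_mul_log_ofReal_exp hn]
  refine inv_mul_log_le_inv_mul_log (ENNReal.ofReal_le_of_le_toReal ?_)
  calc exp (n * (-bernoulliKL p (k / n) - (n : ℝ)⁻¹ * log (n + 1)))
      = exp (-(n * bernoulliKL p (k / n))) / (n + 1) := by
        rw [mul_sub, exp_sub, exp_mul_inv_mul_log_succ hn, mul_neg]
    _ ≤ Bin(n, p).real {k} := (div_le_iff₀' (by positivity)).2 hpoint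
    _ ≤ Bin(n, p).real B := measureReal_mono (Set.singleton_subset_iff.2 hkB)

lemma inv_mul_log_binomial_le (hn : n ≠ 0) (hp : (p : ℝ) ∈ Set.Ioo 0 1)
    (hc : ∀ k ∈ B, k ≤ n → c ≤ bernoulliKL p (k / n)) :
    (((n : ℝ)⁻¹ : ℝ) : EReal) * ENNReal.log (Bin(n, p) B) ≤
      (((n : ℝ)⁻¹ * log (n + 1) - c : ℝ) : EReal) := by
  classical
  have hpoint {k : ℕ} (hkB : k ∈ B) (hkn : k ≤ n) : Bin(n, p).real {k} ≤ exp (-(n * c)) := by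
    have hk : (k : ℝ) = n * (k / n) := by field_simp
    refine (binomial_real_singleton_le_exp (x := ⟨k / n, natCast_div_mem_unitInterval hkn⟩)
      hp hk).trans ?_
    gcongr
    exact hc k hkB hkn
  rw [← inv_mul_log_ofReal_exp hn (_ - c), ← ofReal_measureReal]
  refine inv_mul_log_le_inv_mul_log (ENNReal.ofReal_le_ofReal ?_)
  calc Bin(n, p).real B
      ≤ ∑ k ∈ Finset.range (n + 1) with k ∈ B, Bin(n, p).real {k} := binomial_real_le_sum n p B
    _ ≤ ∑ k ∈ Finset.range (n + 1) with k ∈ B, exp (-(n * c)) := by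
        refine Finset.sum_le_sum fun k hk ↦ ?_
        have hk := Finset.mem_filter.1 hk
        exact hpoint hk.2 (Finset.mem_range_succ_iff.1 hk.1)
    _ ≤ (n + 1) * exp (-(n * c)) := by
        rw [Finset.sum_const, nsmul_eq_mul]
        gcongr
        exact_mod_cast (Finset.card_filter_le _ _).trans_eq (Finset.card_range _)
    _ = exp (n * ((n : ℝ)⁻¹ * log (n + 1) - c)) := by
        rw [mul_sub, exp_sub, exp_mul_inv_mul_log_succ hn, exp_neg, div_eq_mul_inv]

end

lemma tendsto_inv_mul_log_succ :
    Tendsto (fun n : ℕ ↦ (n : ℝ)⁻¹ * log (n + 1)) atTop (𝓝 0) := by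
  have hbound : Tendsto (fun n : ℕ ↦ (n : ℝ)⁻¹ * log 2 + log n / n) atTop (𝓝 0) := by
    simpa using (tendsto_inv_atTop_nhds_zero_nat.mul_const (log 2)).add
      (isLittleO_log_id_atTop.tendsto_div_nhds_zero.comp tendsto_natCast_atTop_atTop)
  refine squeeze_zero' (Eventually.of_forall fun n ↦ ?_) ?_ hbound
  · exact mul_nonneg (by positivity) (log_nonneg (by linarith [n.cast_nonneg (α := ℝ)]))
  · filter_upwards [eventually_ge_atTop 1] with n hn
    have hn : (1 : ℝ) ≤ n := by exact_mod_cast hn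
    rw [div_eq_inv_mul, ← mul_add, ← log_mul two_ne_zero (by positivity)]
    gcongr
    linarith

section

variable {q : ℕ → I} {p : ℝ}

lemma coe_neg_bernoulliKL_le_liminf_binomial (hp : p ∈ Set.Ioo 0 1)
    (hq : Tendsto (fun n ↦ (q n : ℝ)) atTop (𝓝 p)) {U : Set ℝ} {x : ℝ} (hU : U ∈ 𝓝 x)
    (hx : x ∈ I) :
    ((-bernoulliKL p x : ℝ) : EReal) ≤ liminf (fun n : ℕ ↦
      (((n : ℝ)⁻¹ : ℝ) : EReal) * ENNReal.log (Bin(n, q n) {k | (k : ℝ) / n ∈ U})) atTop := by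
  have hk : Tendsto (fun n : ℕ ↦ (⌊x * n⌋₊ : ℝ) / n) atTop (𝓝 x) :=
    (tendsto_nat_floor_mul_div_atTop hx.1).comp tendsto_natCast_atTop_atTop
  have hlim : Tendsto (fun n : ℕ ↦ ((-bernoulliKL (q n) (⌊x * n⌋₊ / n) -
      (n : ℝ)⁻¹ * log (n + 1) : ℝ) : EReal)) atTop (𝓝 ((-bernoulliKL p x : ℝ) : EReal)) := by
    simpa using EReal.tendsto_coe.2
      ((tendsto_bernoulliKL hp hq hk).neg.sub tendsto_inv_mul_log_succ)
  rw [← hlim.liminf_eq]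
  refine liminf_le_liminf ?_
  filter_upwards [eventually_ne_atTop 0, hq.eventually (isOpen_Ioo.mem_nhds hp),
    hk.eventually hU] with n hn hqn hkU
  have hkn : ⌊x * n⌋₊ ≤ n := Nat.floor_le_of_le (mul_le_of_le_one_left n.cast_nonneg hx.2)
  exact neg_bernoulliKL_sub_le_inv_mul_log_binomial hn hqn hkn hkU

theorem neg_iInf_bernoulliRate_le_liminf_binomial (hp : p ∈ Set.Ioo 0 1)
    (hq : Tendsto (fun n ↦ (q n : ℝ)) atTop (𝓝 p)) (A : Set ℝ) :
    -(⨅ x ∈ interior A, bernoulliRate p x) ≤ liminf (fun n : ℕ ↦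
      (((n : ℝ)⁻¹ : ℝ) : EReal) * ENNReal.log (Bin(n, q n) {k | (k : ℝ) / n ∈ A})) atTop := by
  refine EReal.neg_le.1 (le_iInf₂ fun x hx ↦ EReal.neg_le.1 ?_)
  by_cases hxI : x ∈ I
  · rw [bernoulliRate_of_mem hxI, ← EReal.coe_neg]
    exact coe_neg_bernoulliKL_le_liminf_binomial hp hq (mem_interior_iff_mem_nhds.1 hx) hxI
  · rw [bernoulliRate_of_notMem hxI, EReal.neg_top]
    exact bot_le

theorem limsup_binomial_le_neg_iInf_bernoulliRate (hp : p ∈ Set.Ioo 0 1)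
    (hq : Tendsto (fun n ↦ (q n : ℝ)) atTop (𝓝 p)) (A : Set ℝ) :
    limsup (fun n : ℕ ↦
      (((n : ℝ)⁻¹ : ℝ) : EReal) * ENNReal.log (Bin(n, q n) {k | (k : ℝ) / n ∈ A})) atTop ≤
      -(⨅ x ∈ A, bernoulliRate p x) := by
  refine EReal.le_neg.1 (EReal.ge_of_forall_gt_iff_ge.1 fun c hc ↦ EReal.le_neg.1 ?_)
  have hcp {x : ℝ} (hxA : x ∈ A) (hx : x ∈ I) : c ≤ bernoulliKL p x := by
    have hle := hc.le.trans (iInf₂_le x hxA)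
    rw [bernoulliRate_of_mem hx] at hle
    exact EReal.coe_le_coe_iff.1 hle
  have hlim : Tendsto (fun n : ℕ ↦ (((n : ℝ)⁻¹ * log (n + 1) -
      (c - (|log (q n) - log p| + |log (1 - q n) - log (1 - p)|)) : ℝ) : EReal)) atTop
      (𝓝 (-c : EReal)) := by
    simpa using EReal.tendsto_coe.2 (tendsto_inv_mul_log_succ.sub
      ((tendsto_abs_log_sub_add_abs_log_one_sub_sub hp hq).const_sub c))
  rw [← hlim.limsup_eq]
  refine limsup_le_limsup ?_
  filter_upwards [eventually_ne_atTop 0, hq.eventually (isOpen_Ioo.mem_nhds hp)] with n hn hqn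
  refine inv_mul_log_binomial_le hn hqn fun k hkA hkn ↦ ?_
  have hx := natCast_div_mem_unitInterval hkn
  linarith [hcp hkA hx, bernoulliKL_sub_le hp hqn hx]

end

section

variable {ι Ω : Type*} [MeasurableSpace Ω] {μ : Measure Ω} {p : I}

lemma map_mem_eq_bernoulliMeasure [IsProbabilityMeasure μ] {E : Set Ω} (hE : MeasurableSet E)
    (hp : μ.real E = p) : μ.map (· ∈ E) = Ber(True, False, p) := by
  refine Measure.ext_of_singleton fun P ↦ ?_
  rw [Measure.map_apply (measurable_mem.2 hE) .of_discrete]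
  by_cases hP : P
  · have hpre : (· ∈ E) ⁻¹' {P} = E := by ext; simp [hP]
    have hBer : Ber(True, False, p) {P} = unitInterval.toNNReal p := by simp [hP]
    rw [hpre, hBer, ← ofReal_measureReal, hp]
    exact ENNReal.ofReal_eq_coe_nnreal p.2.1
  · have hpre : (· ∈ E) ⁻¹' {P} = Eᶜ := by ext; simp [hP]
    have hBer : Ber(True, False, p) {P} = unitInterval.toNNReal (σ p) := by simp [hP]
    rw [hpre, hBer, ← ofReal_measureReal, probReal_compl_eq_one_sub hE, hp]
    exact ENNReal.ofReal_eq_coe_nnreal (σ p).2.1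

theorem isSetBernoulli_of_iIndepSet {E : ι → Set Ω} (hE : ∀ i, MeasurableSet (E i))
    (hindep : iIndepSet E μ) (hp : ∀ i, μ.real (E i) = p) :
    IsSetBernoulli (fun ω ↦ {i | ω ∈ E i}) Set.univ p μ := by
  have := hindep.isProbabilityMeasure
  have hmeas : Measurable fun ω i ↦ ω ∈ E i :=
    measurable_pi_lambda _ fun i ↦ measurable_mem.2 (hE i)
  have hfun : iIndepFun (fun i ω ↦ ω ∈ E i) μ := hindep.iIndep_comap_mem
  refine ⟨(MeasurableEquiv.setOfPred.measurable.comp hmeas).aemeasurable, ?_⟩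
  have hmap := (iIndepFun_iff_map_fun_eq_infinitePi_map fun i ↦ measurable_mem.2 (hE i)).1 hfun
  simp_rw [map_mem_eq_bernoulliMeasure (hE _) (hp _)] at hmap
  rw [setBernoulli_eq_map]
  simp_rw [Set.mem_univ, ← bernoulliMeasure_def]
  rw [← hmap]
  exact (Measure.map_map MeasurableEquiv.setOfPred.measurable hmeas).symm

theorem hasLaw_ncard_of_iIndepSet [Fintype ι] {E : ι → Set Ω} (hE : ∀ i, MeasurableSet (E i))
    (hindep : iIndepSet E μ) (hp : ∀ i, μ.real (E i) = p) :
    HasLaw (fun ω ↦ {i | ω ∈ E i}.ncard) Bin(Fintype.card ι, p) μ := by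
  have hbin : HasLaw Set.ncard Bin(Fintype.card ι, p) setBer((Set.univ : Set ι), p) := by
    refine ⟨by fun_prop, Measure.ext_of_singleton fun k ↦ ?_⟩
    rw [map_ncard_setBernoulli_singleton Set.finite_univ, binomial_singleton, Set.ncard_univ,
      Nat.card_eq_fintype_card]
  exact hbin.comp (isSetBernoulli_of_iIndepSet hE hindep hp)

lemma measure_inv_mul_sum_ite_mem_eq_binomial {n : ℕ} {E : Fin n → Set Ω}
    [∀ i ω, Decidable (ω ∈ E i)] (hE : ∀ i, MeasurableSet (E i)) (hindep : iIndepSet E μ)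
    (hp : ∀ i, μ.real (E i) = p) (A : Set ℝ) :
    μ {ω | (1 / (n : ℝ)) * (∑ i : Fin n, if ω ∈ E i then (1 : ℝ) else 0) ∈ A} =
      Bin(n, p) {k | (k : ℝ) / n ∈ A} := by
  have hlaw := hasLaw_ncard_of_iIndepSet hE hindep hp
  rw [Fintype.card_fin] at hlaw
  rw [← hlaw.measure_eq .of_discrete]
  congr! 3 with ω
  rw [Finset.sum_boole, one_div_mul_eq_div, ← Set.ncard_coe_finset, Finset.coe_filter_univ]

end

theorem ldp_squarefree_general {Ω : ℕ → Type*} [∀ n, MeasurableSpace (Ω n)]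
    {μ : ∀ n, Measure (Ω n)} {E : ∀ n, Fin n → Set (Ω n)} [∀ n i ω, Decidable (ω ∈ E n i)]
    {q : ℕ → ℝ} {p : ℝ} (hE : ∀ n i, MeasurableSet (E n i))
    (hindep : ∀ n, iIndepSet (E n) (μ n)) (hprob : ∀ n i, (μ n).real (E n i) = q n)
    (hp : p ∈ Set.Ioo 0 1) (hq : Tendsto q atTop (𝓝 p)) (A : Set ℝ) :
    -(⨅ x ∈ interior A, bernoulliRate p x) ≤
        liminf (fun n : ℕ ↦ (((n : ℝ)⁻¹ : ℝ) : EReal) * ENNReal.log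
          (μ n {ω | (1 / (n : ℝ)) *
            (∑ i : Fin n, if ω ∈ E n i then (1 : ℝ) else 0) ∈ A})) atTop ∧
      limsup (fun n : ℕ ↦ (((n : ℝ)⁻¹ : ℝ) : EReal) * ENNReal.log
          (μ n {ω | (1 / (n : ℝ)) *
            (∑ i : Fin n, if ω ∈ E n i then (1 : ℝ) else 0) ∈ A})) atTop ≤
        -(⨅ x ∈ A, bernoulliRate p x) := by
  let r (n : ℕ) : I := Set.projIcc 0 1 zero_le_one (q n)
  have hr (n : ℕ) (i : Fin n) : (μ n).real (E n i) = r n := by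
    have := (hindep n).isProbabilityMeasure
    have hmem : q n ∈ I := by
      rw [← hprob n i]
      exact ⟨measureReal_nonneg, measureReal_le_one⟩
    rw [hprob, show r n = ⟨q n, hmem⟩ from Set.projIcc_of_mem zero_le_one hmem]
  have hrp : Tendsto (fun n ↦ (r n : ℝ)) atTop (𝓝 p) := by
    have hproj : Continuous fun x : ℝ ↦ (Set.projIcc (0 : ℝ) 1 zero_le_one x : ℝ) :=
      continuous_subtype_val.comp continuous_projIcc
    have h := (hproj.tendsto p).comp hq
    rwa [Set.projIcc_of_mem zero_le_one (Set.Ioo_subset_Icc_self hp)] at h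
  simp_rw [measure_inv_mul_sum_ite_mem_eq_binomial (hE _) (hindep _) (hr _)]
  exact ⟨neg_iInf_bernoulliRate_le_liminf_binomial hp hrp A,
    limsup_binomial_le_neg_iInf_bernoulliRate hp hrp A⟩

lemma uniformOn_Icc_real_setOf (n : ℕ) (P : ℕ → Prop) [DecidablePred P] :
    (uniformOn (Set.Icc 1 n)).real {k | P k} = (#{k ∈ Finset.Icc 1 n | P k} : ℝ) / n := by
  have hinter : Set.Icc 1 n ∩ {k | P k} = ↑({k ∈ Finset.Icc 1 n | P k}) := by
    ext; simp
  rw [measureReal_def, ← uniformOn_inter_self (Set.finite_Icc 1 n), hinter, ← Finset.coe_Icc,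
    uniformOn_apply_finset, Finset.inter_eq_right.2 (Finset.filter_subset _ _)]
  simp

lemma iIndepSet_pi {ι : Type*} [Fintype ι] {α : ι → Type*} [∀ i, MeasurableSpace (α i)]
    {ν : ∀ i, Measure (α i)} [∀ i, IsProbabilityMeasure (ν i)] {S : ∀ i, Set (α i)}
    (hS : ∀ i, MeasurableSet (S i)) : iIndepSet (fun i ↦ {ω | ω i ∈ S i}) (Measure.pi ν) :=
  iIndep_comap_mem_iff.1 <|
    iIndepFun_pi (X := fun i x ↦ x ∈ S i) fun i ↦ (measurable_mem.2 (hS i)).aemeasurable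

section

variable {n : ℕ}

lemma isProbabilityMeasure_uniformOn_Icc (i : Fin n) :
    IsProbabilityMeasure (uniformOn (Set.Icc 1 n)) :=
  isProbabilityMeasure_uniformOn (Set.finite_Icc 1 n) (Set.nonempty_Icc.2 i.pos)

lemma iIndepSet_unifVec (S : Set ℕ) :
    iIndepSet (fun i : Fin n ↦ {ω : Fin n → ℕ | ω i ∈ S}) (unifVec n) :=
  @iIndepSet_pi _ _ _ _ _ isProbabilityMeasure_uniformOn_Icc _ fun _ ↦ .of_discrete

lemma unifVec_real_setOf_apply (P : ℕ → Prop) [DecidablePred P] (i : Fin n) :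
    (unifVec n).real {ω | P (ω i)} = (#{k ∈ Finset.Icc 1 n | P k} : ℝ) / n := by
  have := isProbabilityMeasure_uniformOn_Icc i
  rw [← uniformOn_Icc_real_setOf]
  exact (measurePreserving_eval (fun _ ↦ uniformOn (Set.Icc 1 n)) i).measureReal_preimage
    (MeasurableSet.of_discrete (s := {k | P k})).nullMeasurableSet

end

/-- The empirical densities `V_n = n⁻¹ ∑_{i=1}^n 1_{X_i squarefree}`
satisfy a large deviation principle with speed `n` and rate function `squarefreeRate`:
for every Borel set `A ⊆ ℝ`,
`−inf_{x ∈ A°} I(x) ≤ liminf_n (1/n) log P(V_n ∈ A)`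
and `limsup_n (1/n) log P(V_n ∈ A) ≤ −inf_{x ∈ closure A} I(x)`
(with `(1/n) log P = −∞` when the probability vanishes). -/
theorem ldp_squarefree (A : Set ℝ) (hA : MeasurableSet A) :
    -(⨅ x ∈ interior A, squarefreeRate x) ≤
        Filter.liminf
          (fun n : ℕ =>
            (((n : ℝ)⁻¹ : ℝ) : EReal) *
              ENNReal.log
                ((unifVec n) {ω | (1 / (n : ℝ)) *
                  (∑ i : Fin n, if Squarefree (ω i) then (1 : ℝ) else 0) ∈ A}))
          atTop ∧
      Filter.limsup
          (fun n : ℕ =>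
            (((n : ℝ)⁻¹ : ℝ) : EReal) *
              ENNReal.log
                ((unifVec n) {ω | (1 / (n : ℝ)) *
                  (∑ i : Fin n, if Squarefree (ω i) then (1 : ℝ) else 0) ∈ A}))
          atTop
        ≤ -(⨅ x ∈ closure A, squarefreeRate x) := by
  have hrate : squarefreeRate = bernoulliRate (6 / π ^ 2) := rfl
  rw [hrate]
  exact (ldp_squarefree_general (fun _ _ ↦ .of_discrete)
    (fun _ ↦ iIndepSet_unifVec {k | Squarefree k}) (fun _ ↦ unifVec_real_setOf_apply Squarefree)
    six_div_pi_sq_mem_Ioo tendsto_card_squarefree_div A).imp_right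
    fun h ↦ h.trans (EReal.neg_le_neg_iff.2 (biInf_mono subset_closure))
end

section
/- For every integer d ≥ 2, the random variable (1/(d·n^{(2d−1)/2}))·( ∑_{1≤i₁,…,i_d≤n} 1_{gcd(X_{i₁},…,X_{i_d})=1} − n^d·∏_{p prime}(1 − 1/p^d) ) converges in distribution, as n → ∞, to a centered normal distribution with variance ∏_{p prime}(1 − 2/p^d + 1/p^{2d−1}) − ( ∏_{p prime}(1 − 1/p^d) )². -/
open MeasureTheory ProbabilityTheory Filter Real BoundedContinuousFunction

/-!
Let `z_k` be the fraction of the `X_i` divisible by `k`. Möbius inversion writes the fraction of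
coprime `d`-tuples as `∑ k, μ(k) z_k ^ d`. Since `E (z_k - 1/k)² = O(1 / (n k))`, replacing each
`z_k ^ d` by its linearization at `1/k` costs `O(log n / n)` in mean, which is negligible after
multiplication by `√n`. Up to a constant, the linear part is `d` times the average of the i.i.d.
bounded variables `J_{d-1}(X_i) / X_i ^ (d-1)`, with `J` Jordan's totient function. A central limit
theorem for triangular arrays, proved by expanding characteristic functions to second order, applies
to it: the means converge with error `O(log n / n)`, and the limiting variance comes from Wintner's
mean value theorem, because `J_s(x) / x ^ s` and its square are products over the primes dividing
`x`.
-/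

open scoped Topology

section ArithmeticMeans

open scoped ArithmeticFunction.Moebius ArithmeticFunction.zeta

/-! ### Mean values of products over prime divisors -/

/-- The multiplicative function supported on squarefree integers and equal to `h p` at each
prime `p`. It is the Möbius transform of `x ↦ ∏ p ∣ x, (1 + h p)`. -/
def squarefreeProd (h : ℕ → ℝ) : ArithmeticFunction ℝ where
  toFun k := if Squarefree k then ∏ p ∈ k.primeFactors, h p else 0
  map_zero' := by simp

lemma squarefreeProd_apply_of_squarefree (h : ℕ → ℝ) {k : ℕ} (hk : Squarefree k) :
    squarefreeProd h k = ∏ p ∈ k.primeFactors, h p :=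
  if_pos hk

lemma squarefreeProd_apply_of_not_squarefree (h : ℕ → ℝ) {k : ℕ} (hk : ¬Squarefree k) :
    squarefreeProd h k = 0 :=
  if_neg hk

lemma squarefreeProd_apply_prime (h : ℕ → ℝ) {p : ℕ} (hp : p.Prime) :
    squarefreeProd h p = h p := by
  rw [squarefreeProd_apply_of_squarefree h hp.prime.squarefree, hp.primeFactors,
    Finset.prod_singleton]

lemma squarefreeProd_apply_prime_pow (h : ℕ → ℝ) {p e : ℕ} (hp : p.Prime) (he : 2 ≤ e) :
    squarefreeProd h (p ^ e) = 0 :=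
  squarefreeProd_apply_of_not_squarefree h fun hsq => by
    have := (Nat.squarefree_pow_iff hp.ne_one (by lia)).1 hsq
    lia

lemma isMultiplicative_squarefreeProd (h : ℕ → ℝ) : (squarefreeProd h).IsMultiplicative := by
  refine ArithmeticFunction.IsMultiplicative.iff_ne_zero.2 ⟨?_, fun {m n} _ _ hmn => ?_⟩
  · rw [squarefreeProd_apply_of_squarefree h squarefree_one, Nat.primeFactors_one,
      Finset.prod_empty]
  by_cases hsq : Squarefree (m * n)
  · obtain ⟨-, hm, hn⟩ := Nat.squarefree_mul_iff.1 hsq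
    rw [squarefreeProd_apply_of_squarefree h hsq, squarefreeProd_apply_of_squarefree h hm,
      squarefreeProd_apply_of_squarefree h hn, hmn.primeFactors_mul,
      Finset.prod_union hmn.disjoint_primeFactors]
  · rw [squarefreeProd_apply_of_not_squarefree h hsq, eq_comm, mul_eq_zero]
    rcases not_and_or.1 (mt (Nat.squarefree_mul hmn).2 hsq) with hm | hn
    · exact .inl (squarefreeProd_apply_of_not_squarefree h hm)
    · exact .inr (squarefreeProd_apply_of_not_squarefree h hn)

lemma squarefreeProd_mul_zeta (h : ℕ → ℝ) :
    squarefreeProd h * ζ = ArithmeticFunction.prodPrimeFactors fun p => 1 + h p := by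
  have hmul : (squarefreeProd h * ζ).IsMultiplicative :=
    (isMultiplicative_squarefreeProd h).mul ArithmeticFunction.isMultiplicative_zeta.natCast
  refine (hmul.eq_iff_eq_on_prime_powers _ _
    (ArithmeticFunction.IsMultiplicative.prodPrimeFactors _)).2 fun p e hp => ?_
  rw [ArithmeticFunction.prodPrimeFactors_apply (pow_ne_zero e hp.ne_zero),
    ArithmeticFunction.coe_mul_zeta_apply, Nat.sum_divisors_prime_pow hp]
  rcases Nat.eq_zero_or_pos e with rfl | he
  · simp [(isMultiplicative_squarefreeProd h).map_one]
  have hhigher : ∀ i ∈ Finset.range (e + 1), i ∉ Finset.range 2 → squarefreeProd h (p ^ i) = 0 :=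
    fun i _ hi => squarefreeProd_apply_prime_pow h hp (not_lt.1 (mt Finset.mem_range.2 hi))
  rw [← Finset.sum_subset (Finset.range_subset_range.2 (by lia)) hhigher,
    Nat.primeFactors_prime_pow he.ne' hp, Finset.prod_singleton, Finset.sum_range_succ,
    Finset.sum_range_one, pow_zero, pow_one, (isMultiplicative_squarefreeProd h).map_one,
    squarefreeProd_apply_prime h hp]

lemma squarefreeProd_div_pow (h : ℕ → ℝ) (s k : ℕ) :
    squarefreeProd (fun p => h p / (p : ℝ) ^ s) k = squarefreeProd h k / (k : ℝ) ^ s := by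
  by_cases hk : Squarefree k
  · rw [squarefreeProd_apply_of_squarefree _ hk, squarefreeProd_apply_of_squarefree h hk,
      Finset.prod_div_distrib, Finset.prod_pow, ← Nat.cast_prod,
      Nat.prod_primeFactors_of_squarefree hk]
  · simp only [squarefreeProd_apply_of_not_squarefree _ hk, zero_div]

lemma squarefreeProd_neg_one : squarefreeProd (fun _ => -1) = (μ : ArithmeticFunction ℝ) := by
  ext k
  by_cases hk : Squarefree k
  · rw [squarefreeProd_apply_of_squarefree _ hk, Finset.prod_const, ArithmeticFunction.intCoe_apply,
      ArithmeticFunction.moebius_apply_of_squarefree hk,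
      ← (ArithmeticFunction.cardDistinctFactors_eq_cardFactors_iff_squarefree hk.ne_zero).2 hk]
    push_cast
    rfl
  · rw [squarefreeProd_apply_of_not_squarefree _ hk, ArithmeticFunction.intCoe_apply,
      ArithmeticFunction.moebius_eq_zero_of_not_squarefree hk, Int.cast_zero]

lemma squarefreeProd_neg_one_div_pow (s k : ℕ) :
    squarefreeProd (fun p => -1 / (p : ℝ) ^ s) k = (μ k : ℝ) / (k : ℝ) ^ s := by
  rw [squarefreeProd_div_pow (fun _ => -1) s k, squarefreeProd_neg_one,
    ArithmeticFunction.intCoe_apply]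

lemma primeFactors_prod_primes (S : Finset Nat.Primes) :
    (∏ p ∈ S, (p : ℕ)).primeFactors = S.image (fun p : Nat.Primes => (p : ℕ)) := by
  have hprod : ∏ p ∈ S.image (fun p : Nat.Primes => (p : ℕ)), p = ∏ p ∈ S, (p : ℕ) :=
    Finset.prod_image Nat.Primes.coe_nat_injective.injOn
  rw [← hprod]
  refine Nat.primeFactors_prod fun p hp => ?_
  obtain ⟨q, -, rfl⟩ := Finset.mem_image.1 hp
  exact q.2

lemma squarefree_prod_primes (S : Finset Nat.Primes) : Squarefree (∏ p ∈ S, (p : ℕ)) := by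
  refine Finset.squarefree_prod_of_pairwise_isCoprime (fun p _ q _ hpq => ?_)
    fun p _ => p.2.prime.squarefree
  exact Nat.coprime_iff_isRelPrime.1
    ((Nat.coprime_primes p.2 q.2).2 (Nat.Primes.coe_nat_injective.ne hpq))

lemma summable_squarefreeProd {h : ℕ → ℝ} (hh : Summable fun p : Nat.Primes => h p) :
    Summable (squarefreeProd h) := by
  have hinj : Function.Injective fun S : Finset Nat.Primes => ∏ p ∈ S, (p : ℕ) := fun S T hST =>
    Finset.image_injective Nat.Primes.coe_nat_injective <|
      (primeFactors_prod_primes S).symm.trans <|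
        (congrArg Nat.primeFactors hST).trans (primeFactors_prod_primes T)
  refine (hinj.summable_iff fun k hk => squarefreeProd_apply_of_not_squarefree h fun hsq => ?_).1 ?_
  · refine hk ⟨k.primeFactors.subtype Nat.Prime, ?_⟩
    refine Eq.trans ?_ (Nat.prod_primeFactors_of_squarefree hsq)
    exact Finset.prod_subtype_of_mem id fun p => Nat.prime_of_mem_primeFactors
  · refine (summable_finsetProd_of_summable_norm hh.norm).congr fun S => ?_
    rw [Function.comp_apply, squarefreeProd_apply_of_squarefree h (squarefree_prod_primes S),
      primeFactors_prod_primes]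
    exact (Finset.prod_image Nat.Primes.coe_nat_injective.injOn).symm

lemma tsum_squarefreeProd {h : ℕ → ℝ} (hh : Summable fun p : Nat.Primes => h p) :
    ∑' k, squarefreeProd h k = ∏' p : Nat.Primes, (1 + h p) := by
  have hf := isMultiplicative_squarefreeProd h
  rw [← EulerProduct.eulerProduct_tprod hf.map_one hf.map_mul_of_coprime
    (summable_squarefreeProd hh).norm (squarefreeProd h).map_zero]
  refine tprod_congr fun p => ?_
  rw [tsum_eq_sum (s := Finset.range 2) fun e he =>
    squarefreeProd_apply_prime_pow h p.2 (not_lt.1 (mt Finset.mem_range.2 he)),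
    Finset.sum_range_succ, Finset.sum_range_one, pow_zero, pow_one, hf.map_one,
    squarefreeProd_apply_prime h p.2]

lemma tendsto_natDiv_div_atTop (k : ℕ) :
    Tendsto (fun n : ℕ => ((n / k : ℕ) : ℝ) / n) atTop (𝓝 (1 / k)) := by
  refine ((tendsto_nat_floor_mul_div_atTop (R := ℝ) (a := 1 / k) (by positivity)).comp
    tendsto_natCast_atTop_atTop).congr fun n => ?_
  rw [Function.comp_apply, one_div_mul_eq_div, Nat.floor_div_natCast, Nat.floor_natCast]

/-- Wintner's mean value theorem. -/
lemma tendsto_sum_mul_zeta_div {f : ArithmeticFunction ℝ}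
    (hf : Summable fun k : ℕ => f k / k) :
    Tendsto (fun n : ℕ => (∑ x ∈ Finset.Ioc 0 n, (f * ζ) x) / n) atTop (𝓝 (∑' k : ℕ, f k / k)) := by
  have hdiv_le (n k : ℕ) : ((n / k : ℕ) : ℝ) / n ≤ 1 / k := by
    rcases Nat.eq_zero_or_pos n with rfl | hn
    · simp
    · rw [div_le_iff₀ (by positivity), one_div_mul_eq_div]
      exact Nat.cast_div_le
  have hsum (n : ℕ) : (∑ x ∈ Finset.Ioc 0 n, (f * ζ) x) / n
      = ∑' k : ℕ, f k * (((n / k : ℕ) : ℝ) / n) := by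
    rw [ArithmeticFunction.sum_Ioc_mul_zeta_eq_sum, Finset.sum_div, tsum_eq_sum]
    · exact Finset.sum_congr rfl fun k _ => mul_div_assoc _ _ _
    · intro k hk
      have hdiv : n / k = 0 := Nat.div_eq_zero_iff.2 (by rw [Finset.mem_Ioc] at hk; lia)
      rw [hdiv, Nat.cast_zero, zero_div, mul_zero]
  simp_rw [hsum]
  refine tendsto_tsum_of_dominated_convergence hf.norm (fun k => ?_)
    (Eventually.of_forall fun n k => ?_)
  · simpa only [mul_one_div] using (tendsto_natDiv_div_atTop k).const_mul (f k)
  · have hnonneg : 0 ≤ ((n / k : ℕ) : ℝ) / n := by positivity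
    rw [norm_mul, norm_div (f k), RCLike.norm_natCast, div_eq_mul_one_div ‖f k‖,
      Real.norm_of_nonneg hnonneg]
    exact mul_le_mul_of_nonneg_left (hdiv_le n k) (norm_nonneg _)

lemma tendsto_sum_prod_primeFactors_div {h : ℕ → ℝ}
    (hh : Summable fun p : Nat.Primes => h p / p) :
    Tendsto (fun n : ℕ => (∑ x ∈ Finset.Ioc 0 n, ∏ p ∈ x.primeFactors, (1 + h p)) / n) atTop
      (𝓝 (∏' p : Nat.Primes, (1 + h p / p))) := by
  have hdiv : ⇑(squarefreeProd fun p => h p / p) = fun k : ℕ => squarefreeProd h k / k :=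
    funext fun k => by simpa only [pow_one] using squarefreeProd_div_pow h 1 k
  have hsum := summable_squarefreeProd (h := fun p => h p / p) hh
  have hlim := tsum_squarefreeProd (h := fun p => h p / p) hh
  rw [hdiv] at hsum hlim
  rw [← hlim]
  refine (tendsto_sum_mul_zeta_div hsum).congr fun n => ?_
  refine congrArg (· / (n : ℝ)) (Finset.sum_congr rfl fun x hx => ?_)
  rw [squarefreeProd_mul_zeta,
    ArithmeticFunction.prodPrimeFactors_apply (Finset.mem_Ioc.1 hx).1.ne']

/-! ### The Jordan totient and coprimality -/

/-- The ratio `J_s(x) / x ^ s`, where `J_s` is Jordan's totient function. -/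
noncomputable def jordanRatio (s x : ℕ) : ℝ :=
  ∏ p ∈ x.primeFactors, (1 - 1 / (p : ℝ) ^ s)

/-- The limiting density `1 / ζ(d)` of coprime `d`-tuples of integers. -/
noncomputable def coprimeDensity (d : ℕ) : ℝ :=
  ∏' p : Nat.Primes, (1 - 1 / (p : ℝ) ^ d)

lemma jordanRatio_mem_Icc (s x : ℕ) : jordanRatio s x ∈ Set.Icc (0 : ℝ) 1 := by
  have hfactor : ∀ p ∈ x.primeFactors, 1 / (p : ℝ) ^ s ∈ Set.Icc (0 : ℝ) 1 := fun p hp => by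
    have hp1 : (1 : ℝ) ≤ p := Nat.one_le_cast.2 (Nat.pos_of_mem_primeFactors hp)
    exact ⟨by positivity, div_le_one_of_le₀ (one_le_pow₀ hp1) (by positivity)⟩
  exact ⟨Finset.prod_nonneg fun p hp => sub_nonneg.2 (hfactor p hp).2,
    Finset.prod_le_one (fun p hp => sub_nonneg.2 (hfactor p hp).2)
      fun p hp => sub_le_self _ (hfactor p hp).1⟩

lemma prodPrimeFactors_eq_sum_Ioc (h : ℕ → ℝ) {n x : ℕ} (hx : x ∈ Finset.Ioc 0 n) :
    ∏ p ∈ x.primeFactors, (1 + h p)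
      = ∑ k ∈ Finset.Ioc 0 n, squarefreeProd h k * if k ∣ x then 1 else 0 := by
  obtain ⟨hx0, hxn⟩ := Finset.mem_Ioc.1 hx
  have hdivisors : x.divisors = (Finset.Ioc 0 n).filter (· ∣ x) := by
    ext k
    simp only [Nat.mem_divisors, Finset.mem_filter, Finset.mem_Ioc]
    exact ⟨fun hk => ⟨⟨Nat.pos_of_dvd_of_pos hk.1 hx0, (Nat.le_of_dvd hx0 hk.1).trans hxn⟩, hk.1⟩,
      fun hk => ⟨hk.2, hx0.ne'⟩⟩
  rw [← ArithmeticFunction.prodPrimeFactors_apply (f := fun p => 1 + h p) hx0.ne',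
    ← squarefreeProd_mul_zeta, ArithmeticFunction.coe_mul_zeta_apply, hdivisors,
    Finset.sum_filter]
  simp only [mul_ite, mul_one, mul_zero]

lemma jordanRatio_eq_sum_Ioc (s : ℕ) {n x : ℕ} (hx : x ∈ Finset.Ioc 0 n) :
    jordanRatio s x = ∑ k ∈ Finset.Ioc 0 n, (μ k : ℝ) / (k : ℝ) ^ s * if k ∣ x then 1 else 0 := by
  simp_rw [← squarefreeProd_neg_one_div_pow]
  rw [← prodPrimeFactors_eq_sum_Ioc _ hx, jordanRatio]
  simp only [neg_div, sub_eq_add_neg]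

lemma ite_eq_one_eq_sum_moebius {n x : ℕ} (hx : x ∈ Finset.Ioc 0 n) :
    (if x = 1 then (1 : ℝ) else 0)
      = ∑ k ∈ Finset.Ioc 0 n, (μ k : ℝ) * if k ∣ x then 1 else 0 := by
  simp_rw [← ArithmeticFunction.intCoe_apply (R := ℝ) (f := μ), ← squarefreeProd_neg_one]
  rw [← prodPrimeFactors_eq_sum_Ioc _ hx, add_neg_cancel, Finset.prod_const, zero_pow_eq]
  have hx0 : x ≠ 0 := (Finset.mem_Ioc.1 hx).1.ne'
  simp only [Finset.card_eq_zero, Nat.primeFactors_eq_empty, hx0, false_or]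

lemma summable_primes_one_div_pow {a : ℕ} (ha : 1 < a) :
    Summable fun p : Nat.Primes => 1 / (p : ℝ) ^ a :=
  (Real.summable_one_div_nat_pow.2 ha).comp_injective Nat.Primes.coe_nat_injective

lemma tendsto_sum_jordanRatio_div {s : ℕ} (hs : s ≠ 0) :
    Tendsto (fun n : ℕ => (∑ x ∈ Finset.Ioc 0 n, jordanRatio s x) / n) atTop
      (𝓝 (coprimeDensity (s + 1))) := by
  have hlocal (p : ℕ) : -(1 / (p : ℝ) ^ s) / p = -(1 / (p : ℝ) ^ (s + 1)) := by
    rw [pow_succ, neg_div, div_div]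
  have hsum : Summable fun p : Nat.Primes => -(1 / (p : ℝ) ^ s) / p := by
    simpa only [hlocal] using (summable_primes_one_div_pow (by lia : 1 < s + 1)).neg
  have hmean := tendsto_sum_prod_primeFactors_div (h := fun p => -(1 / (p : ℝ) ^ s)) hsum
  simpa only [jordanRatio, coprimeDensity, hlocal, ← sub_eq_add_neg] using hmean

lemma tendsto_sum_jordanRatio_sq_div {s : ℕ} (hs : s ≠ 0) :
    Tendsto (fun n : ℕ => (∑ x ∈ Finset.Ioc 0 n, jordanRatio s x ^ 2) / n) atTop
      (𝓝 (∏' p : Nat.Primes, (1 - 2 / (p : ℝ) ^ (s + 1) + 1 / (p : ℝ) ^ (2 * s + 1)))) := by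
  set h : ℕ → ℝ := fun p => -(2 / (p : ℝ) ^ s) + 1 / (p : ℝ) ^ (2 * s)
  have hlocal (p : ℕ) : h p / p = -2 * (1 / (p : ℝ) ^ (s + 1)) + 1 / (p : ℝ) ^ (2 * s + 1) := by
    simp only [h, pow_succ]
    ring
  have hsq (x : ℕ) : ∏ p ∈ x.primeFactors, (1 + h p) = jordanRatio s x ^ 2 := by
    rw [jordanRatio, ← Finset.prod_pow]
    refine Finset.prod_congr rfl fun p _ => ?_
    simp only [h, mul_comm 2 s, pow_mul]
    ring
  have hsum : Summable fun p : Nat.Primes => h p / p := by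
    simp_rw [hlocal]
    exact ((summable_primes_one_div_pow (by lia)).mul_left _).add
      (summable_primes_one_div_pow (by lia))
  have hmean := tendsto_sum_prod_primeFactors_div hsum
  simp_rw [hsq, hlocal] at hmean
  convert hmean using 4 with p
  ring

lemma hasSum_moebius_div_pow {a : ℕ} (ha : 1 < a) :
    HasSum (fun k : ℕ => (μ k : ℝ) / (k : ℝ) ^ a) (coprimeDensity a) := by
  have hsum : Summable fun p : Nat.Primes => -1 / (p : ℝ) ^ a := by
    simpa only [neg_div] using (summable_primes_one_div_pow ha).neg
  have htsum := tsum_squarefreeProd (h := fun p => -1 / (p : ℝ) ^ a) hsum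
  have hsummable := summable_squarefreeProd (h := fun p => -1 / (p : ℝ) ^ a) hsum
  rw [funext (squarefreeProd_neg_one_div_pow a)] at htsum hsummable
  simp only [neg_div, ← sub_eq_add_neg] at htsum
  rw [coprimeDensity, ← htsum]
  exact hsummable.hasSum

lemma abs_moebius_div_pow_le (k a : ℕ) : |(μ k : ℝ) / (k : ℝ) ^ a| ≤ 1 / (k : ℝ) ^ a := by
  rw [abs_div, abs_of_nonneg (by positivity : (0 : ℝ) ≤ (k : ℝ) ^ a)]
  gcongr
  exact_mod_cast ArithmeticFunction.abs_moebius_le_one (n := k)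

lemma abs_sum_moebius_div_pow_sub_le {a n : ℕ} (ha : 1 < a) (hn : n ≠ 0) :
    |∑ k ∈ Finset.Ioc 0 n, (μ k : ℝ) / (k : ℝ) ^ a - coprimeDensity a| ≤ 1 / n := by
  have htail : Tendsto
      (fun N : ℕ => |∑ k ∈ Finset.Ioc 0 n, (μ k : ℝ) / (k : ℝ) ^ a
        - ∑ k ∈ Finset.range (N + 1), (μ k : ℝ) / (k : ℝ) ^ a|) atTop
      (𝓝 |∑ k ∈ Finset.Ioc 0 n, (μ k : ℝ) / (k : ℝ) ^ a - coprimeDensity a|) :=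
    (tendsto_const_nhds.sub
      ((hasSum_moebius_div_pow ha).tendsto_sum_nat.comp (tendsto_add_atTop_nat 1))).abs
  refine le_of_tendsto htail ?_
  filter_upwards [eventually_ge_atTop n] with N hN
  rw [Finset.range_eq_Ico, Finset.sum_eq_sum_Ico_succ_bot N.succ_pos, Nat.cast_zero,
    zero_pow (by lia), div_zero, zero_add]
  change |_ - ∑ k ∈ Finset.Ioc 0 N, (μ k : ℝ) / (k : ℝ) ^ a| ≤ _
  rw [← Finset.sum_Ioc_consecutive _ n.zero_le hN, sub_add_cancel_left, abs_neg]
  calc |∑ k ∈ Finset.Ioc n N, (μ k : ℝ) / (k : ℝ) ^ a|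
      ≤ ∑ k ∈ Finset.Ioc n N, ((k : ℝ) ^ 2)⁻¹ := by
        refine (Finset.abs_sum_le_sum_abs _ _).trans (Finset.sum_le_sum fun k hk => ?_)
        have hk1 : (1 : ℝ) ≤ k := Nat.one_le_cast.2 (n.zero_le.trans_lt (Finset.mem_Ioc.1 hk).1)
        refine (abs_moebius_div_pow_le k a).trans ?_
        rw [← one_div]
        gcongr
        exact ha
    _ ≤ (n : ℝ)⁻¹ - (N : ℝ)⁻¹ := sum_Ioc_inv_sq_le_sub hn hN
    _ ≤ 1 / n := by
        rw [one_div]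
        exact sub_le_self _ (by positivity)

lemma abs_natDiv_div_sub_le {n k : ℕ} (hn : n ≠ 0) (hk : k ≠ 0) :
    |((n / k : ℕ) : ℝ) / n - 1 / k| ≤ 1 / n := by
  have hn' : (0 : ℝ) < n := by positivity
  have hlower : (n : ℝ) / k < (n / k : ℕ) + 1 := by
    rw [← Nat.floor_div_eq_div (K := ℝ)]
    exact Nat.lt_floor_add_one _
  have hupper : ((n / k : ℕ) : ℝ) ≤ n / k := Nat.cast_div_le
  have hscale : ((n / k : ℕ) : ℝ) / n - 1 / k = ((n / k : ℕ) - (n : ℝ) / k) / n := by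
    field_simp
  rw [hscale, abs_div, abs_of_pos hn']
  gcongr
  exact abs_le.2 ⟨by linarith, by linarith⟩

lemma sum_Ioc_one_div_eq_harmonic (n : ℕ) :
    ∑ k ∈ Finset.Ioc 0 n, 1 / (k : ℝ) = (harmonic n : ℝ) := by
  rw [harmonic_eq_sum_Icc]
  push_cast
  simp only [one_div]
  rfl

lemma one_le_harmonic {n : ℕ} (hn : n ≠ 0) : (1 : ℝ) ≤ (harmonic n : ℝ) := by
  rw [← sum_Ioc_one_div_eq_harmonic]
  have hmem : 1 ∈ Finset.Ioc 0 n := Finset.mem_Ioc.2 ⟨one_pos, Nat.one_le_iff_ne_zero.2 hn⟩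
  simpa only [Nat.cast_one, div_one] using
    Finset.single_le_sum (f := fun k : ℕ => 1 / (k : ℝ)) (fun _ _ => by positivity) hmem

lemma tendsto_harmonic_div_sqrt_atTop :
    Tendsto (fun n : ℕ => (harmonic n : ℝ) / √(n : ℝ)) atTop (𝓝 0) := by
  have hone : Tendsto (fun x : ℝ => 1 / √x) atTop (𝓝 0) :=
    (tendsto_const_nhds (x := (1 : ℝ))).div_atTop Real.tendsto_sqrt_atTop
  have hlog : Tendsto (fun x : ℝ => Real.log x / √x) atTop (𝓝 0) := by
    simpa only [Real.sqrt_eq_rpow] using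
      (isLittleO_log_rpow_atTop (r := 1 / 2) (by norm_num)).tendsto_div_nhds_zero
  have hsum : Tendsto (fun n : ℕ => (1 + Real.log n) / √(n : ℝ)) atTop (𝓝 0) := by
    simpa only [add_div, add_zero, Function.comp_def] using
      (hone.add hlog).comp tendsto_natCast_atTop_atTop
  refine squeeze_zero (fun n => ?_) (fun n => ?_) hsum
  · rw [← sum_Ioc_one_div_eq_harmonic]
    positivity
  · exact div_le_div_of_nonneg_right (harmonic_le_one_add_log n) (Real.sqrt_nonneg _)

lemma sum_Ioc_ite_dvd (n k : ℕ) :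
    ∑ x ∈ Finset.Ioc 0 n, (if k ∣ x then (1 : ℝ) else 0) = ((n / k : ℕ) : ℝ) := by
  rw [Finset.sum_boole, Nat.Ioc_filter_dvd_card_eq_div]

lemma abs_sum_jordanRatio_div_sub_le {s n : ℕ} (hs : s ≠ 0) (hn : n ≠ 0) :
    |(∑ x ∈ Finset.Ioc 0 n, jordanRatio s x) / n - coprimeDensity (s + 1)|
      ≤ 2 * (harmonic n : ℝ) / n := by
  have hmean : (∑ x ∈ Finset.Ioc 0 n, jordanRatio s x) / n
      = ∑ k ∈ Finset.Ioc 0 n, (μ k : ℝ) / (k : ℝ) ^ s * (((n / k : ℕ) : ℝ) / n) := by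
    rw [Finset.sum_congr rfl fun x hx => jordanRatio_eq_sum_Ioc s hx, Finset.sum_comm,
      Finset.sum_div]
    simp_rw [← Finset.mul_sum, sum_Ioc_ite_dvd, mul_div_assoc]
  have hround : |∑ k ∈ Finset.Ioc 0 n, (μ k : ℝ) / (k : ℝ) ^ s * (((n / k : ℕ) : ℝ) / n)
      - ∑ k ∈ Finset.Ioc 0 n, (μ k : ℝ) / (k : ℝ) ^ (s + 1)| ≤ (harmonic n : ℝ) / n := by
    rw [← Finset.sum_sub_distrib, ← sum_Ioc_one_div_eq_harmonic, Finset.sum_div]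
    refine (Finset.abs_sum_le_sum_abs _ _).trans (Finset.sum_le_sum fun k hk => ?_)
    have hk0 : k ≠ 0 := (Finset.mem_Ioc.1 hk).1.ne'
    have hk1 : (1 : ℝ) ≤ k := Nat.one_le_cast.2 (Nat.one_le_iff_ne_zero.2 hk0)
    have hfactor : (μ k : ℝ) / (k : ℝ) ^ s * (((n / k : ℕ) : ℝ) / n) - (μ k : ℝ) / (k : ℝ) ^ (s + 1)
        = (μ k : ℝ) / (k : ℝ) ^ s * (((n / k : ℕ) : ℝ) / n - 1 / k) := by
      rw [pow_succ]
      ring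
    rw [hfactor, abs_mul, div_eq_mul_one_div (1 / (k : ℝ))]
    refine mul_le_mul ((abs_moebius_div_pow_le k s).trans ?_) (abs_natDiv_div_sub_le hn hk0)
      (abs_nonneg _) (by positivity)
    exact one_div_le_one_div_of_le (by positivity) (le_self_pow₀ hk1 hs)
  rw [hmean]
  refine (abs_sub_le _ _ _).trans ((add_le_add hround
    (abs_sum_moebius_div_pow_sub_le (by lia : 1 < s + 1) hn)).trans ?_)
  rw [← add_div, two_mul]
  gcongr
  exact one_le_harmonic hn

/-! ### Linearizing the count of coprime tuples -/

/-- The fraction of the entries of `ω` that are divisible by `k`. -/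
noncomputable def divisibleFraction {n : ℕ} (k : ℕ) (ω : Fin n → ℕ) : ℝ :=
  (∑ i, if k ∣ ω i then (1 : ℝ) else 0) / n

/-- The fraction of the `d`-tuples of positions (repetitions allowed) at which the entries of `ω`
are jointly coprime. -/
noncomputable def coprimeFraction {n : ℕ} (d : ℕ) (ω : Fin n → ℕ) : ℝ :=
  (∑ i : Fin d → Fin n,
    if Finset.univ.gcd (fun t : Fin d => ω (i t)) = 1 then (1 : ℝ) else 0) / (n : ℝ) ^ d

lemma divisibleFraction_mem_Icc {n : ℕ} (k : ℕ) (ω : Fin n → ℕ) :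
    divisibleFraction k ω ∈ Set.Icc (0 : ℝ) 1 := by
  refine ⟨by unfold divisibleFraction; positivity, div_le_one_of_le₀ ?_ n.cast_nonneg⟩
  calc ∑ i, (if k ∣ ω i then (1 : ℝ) else 0) ≤ ∑ _i : Fin n, (1 : ℝ) :=
        Finset.sum_le_sum fun i _ => by split_ifs <;> norm_num
    _ = n := by rw [Fin.sum_const, nsmul_eq_mul, mul_one]

lemma coprimeFraction_eq_sum_moebius {d n : ℕ} [NeZero d] {ω : Fin n → ℕ}
    (hω : ∀ i, ω i ∈ Finset.Ioc 0 n) :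
    coprimeFraction d ω = ∑ k ∈ Finset.Ioc 0 n, (μ k : ℝ) * divisibleFraction k ω ^ d := by
  simp_rw [coprimeFraction, divisibleFraction, div_pow, Fintype.sum_pow, ← mul_div_assoc,
    ← Finset.sum_div, Finset.mul_sum]
  rw [Finset.sum_comm]
  refine congrArg (· / (n : ℝ) ^ d) (Finset.sum_congr rfl fun i _ => ?_)
  have hgcd : Finset.univ.gcd (fun t : Fin d => ω (i t)) ∈ Finset.Ioc 0 n := by
    have hdvd : Finset.univ.gcd (fun t : Fin d => ω (i t)) ∣ ω (i 0) :=
      Finset.gcd_dvd (Finset.mem_univ (0 : Fin d))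
    obtain ⟨hpos, hle⟩ := Finset.mem_Ioc.1 (hω (i 0))
    exact Finset.mem_Ioc.2 ⟨Nat.pos_of_dvd_of_pos hdvd hpos, (Nat.le_of_dvd hpos hdvd).trans hle⟩
  rw [ite_eq_one_eq_sum_moebius hgcd]
  refine Finset.sum_congr rfl fun k _ => ?_
  simp only [Finset.prod_ite_zero, Finset.prod_const_one, Finset.dvd_gcd_iff]

lemma abs_pow_succ_sub_linearization_le {z a : ℝ} (hz : z ∈ Set.Icc (0 : ℝ) 1)
    (ha : a ∈ Set.Icc (0 : ℝ) 1) (s : ℕ) :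
    |z ^ (s + 1) - a ^ (s + 1) - (s + 1) * a ^ s * (z - a)|
      ≤ s * (s + 1) / 2 * (z - a) ^ 2 := by
  induction s with
  | zero => simp
  | succ s ih =>
    have hrec : z ^ (s + 1 + 1) - a ^ (s + 1 + 1)
          - ((s + 1 : ℕ) + 1) * a ^ (s + 1) * (z - a)
        = z * (z ^ (s + 1) - a ^ (s + 1) - (s + 1) * a ^ s * (z - a))
          + (s + 1) * a ^ s * (z - a) ^ 2 := by
      push_cast
      ring
    have ha0 : 0 ≤ a := ha.1
    rw [hrec]
    calc _ ≤ z * |z ^ (s + 1) - a ^ (s + 1) - (s + 1) * a ^ s * (z - a)|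
          + (s + 1) * a ^ s * (z - a) ^ 2 := by
          refine (abs_add_le _ _).trans_eq ?_
          rw [abs_mul, abs_of_nonneg hz.1,
            abs_of_nonneg (by positivity : 0 ≤ (s + 1) * a ^ s * (z - a) ^ 2)]
      _ ≤ 1 * (s * (s + 1) / 2 * (z - a) ^ 2) + (s + 1) * 1 * (z - a) ^ 2 := by
          gcongr
          · exact hz.2
          · exact pow_le_one₀ ha.1 ha.2
      _ = ((s + 1 : ℕ) : ℝ) * ((s + 1 : ℕ) + 1) / 2 * (z - a) ^ 2 := by
          push_cast
          ring

lemma sum_moebius_mul_divisibleFraction {s n : ℕ} {ω : Fin n → ℕ}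
    (hω : ∀ i, ω i ∈ Finset.Ioc 0 n) :
    ∑ k ∈ Finset.Ioc 0 n, (μ k : ℝ) / (k : ℝ) ^ s * divisibleFraction k ω
      = (∑ i, jordanRatio s (ω i)) / n := by
  simp_rw [divisibleFraction, ← mul_div_assoc, ← Finset.sum_div, Finset.mul_sum]
  rw [Finset.sum_comm]
  exact congrArg (· / (n : ℝ))
    (Finset.sum_congr rfl fun i _ => (jordanRatio_eq_sum_Ioc s (hω i)).symm)

lemma abs_sum_moebius_mul_linearization_error_le (s : ℕ) {n : ℕ} (ω : Fin n → ℕ) :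
    |∑ k ∈ Finset.Ioc 0 n, (μ k : ℝ) * (divisibleFraction k ω ^ (s + 1) - (1 / k : ℝ) ^ (s + 1)
        - (s + 1) * (1 / k : ℝ) ^ s * (divisibleFraction k ω - 1 / k))|
      ≤ s * (s + 1) / 2 * ∑ k ∈ Finset.Ioc 0 n, (divisibleFraction k ω - 1 / k) ^ 2 := by
  rw [Finset.mul_sum]
  refine (Finset.abs_sum_le_sum_abs _ _).trans (Finset.sum_le_sum fun k hk => ?_)
  have hmoebius : |(μ k : ℝ)| ≤ 1 := by
    exact_mod_cast ArithmeticFunction.abs_moebius_le_one (n := k)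
  have hk1 : (1 : ℝ) ≤ k := Nat.one_le_cast.2 (Finset.mem_Ioc.1 hk).1
  rw [abs_mul]
  exact (mul_le_of_le_one_left (abs_nonneg _) hmoebius).trans
    (abs_pow_succ_sub_linearization_le (divisibleFraction_mem_Icc k ω)
      ⟨by positivity, div_le_one_of_le₀ hk1 (by positivity)⟩ s)

lemma abs_coprimeFraction_sub_linearization_le {s n : ℕ} (hs : s ≠ 0) (hn : n ≠ 0)
    {ω : Fin n → ℕ} (hω : ∀ i, ω i ∈ Finset.Ioc 0 n) :
    |coprimeFraction (s + 1) ω - coprimeDensity (s + 1)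
        - (s + 1) * ((∑ i, jordanRatio s (ω i)) / n - coprimeDensity (s + 1))|
      ≤ s / n + s * (s + 1) / 2
        * ∑ k ∈ Finset.Ioc 0 n, (divisibleFraction k ω - 1 / k) ^ 2 := by
  set z : ℕ → ℝ := fun k => divisibleFraction k ω
  set c : ℝ := ∑ k ∈ Finset.Ioc 0 n, (μ k : ℝ) / (k : ℝ) ^ (s + 1)
  set R : ℕ → ℝ := fun k => z k ^ (s + 1) - (1 / k : ℝ) ^ (s + 1)
    - (s + 1) * (1 / k : ℝ) ^ s * (z k - 1 / k)
  have hexpand : coprimeFraction (s + 1) ω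
      = (s + 1) * ((∑ i, jordanRatio s (ω i)) / n) - s * c
        + ∑ k ∈ Finset.Ioc 0 n, (μ k : ℝ) * R k := by
    rw [coprimeFraction_eq_sum_moebius hω, ← sum_moebius_mul_divisibleFraction hω,
      Finset.mul_sum, Finset.mul_sum, ← Finset.sum_sub_distrib, ← Finset.sum_add_distrib]
    refine Finset.sum_congr rfl fun k _ => ?_
    simp only [R, z, pow_succ, div_eq_mul_inv, one_mul, inv_pow, mul_inv]
    ring
  have hremainder : |∑ k ∈ Finset.Ioc 0 n, (μ k : ℝ) * R k|
      ≤ s * (s + 1) / 2 * ∑ k ∈ Finset.Ioc 0 n, (z k - 1 / k) ^ 2 :=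
    abs_sum_moebius_mul_linearization_error_le s ω
  have htail : |s * (c - coprimeDensity (s + 1))| ≤ s / n := by
    rw [abs_mul, Nat.abs_cast, div_eq_mul_one_div]
    gcongr
    exact abs_sum_moebius_div_pow_sub_le (by lia) hn
  have hsplit : coprimeFraction (s + 1) ω - coprimeDensity (s + 1)
        - (s + 1) * ((∑ i, jordanRatio s (ω i)) / n - coprimeDensity (s + 1))
      = ∑ k ∈ Finset.Ioc 0 n, (μ k : ℝ) * R k - s * (c - coprimeDensity (s + 1)) := by
    rw [hexpand]
    ring
  rw [hsplit]
  exact (abs_sub _ _).trans ((add_le_add hremainder htail).trans_eq (add_comm _ _))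

end ArithmeticMeans

/-! ### Moments under the uniform law -/

lemma integral_uniformOn_Icc_one (n : ℕ) (f : ℕ → ℝ) :
    ∫ x, f x ∂(uniformOn (Set.Icc 1 n)) = (∑ x ∈ Finset.Ioc 0 n, f x) / n := by
  have hint : IntegrableOn f (Finset.Ioc 0 n : Set ℕ) Measure.count := by
    rw [← (Finset.Ioc 0 n : Set ℕ).biUnion_of_singleton]
    exact integrableOn_finset_iUnion.2 fun x _ => integrableOn_singleton (by finiteness) (by simp)
  have hset : Set.Icc 1 n = (Finset.Ioc 0 n : Set ℕ) := by
    ext x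
    rw [Finset.coe_Ioc, Set.mem_Icc, Set.mem_Ioc, Nat.succ_le_iff]
  rw [hset, uniformOn, ProbabilityTheory.cond, integral_smul_measure, setIntegral_finset _ hint,
    Measure.count_apply_finset]
  simp [Measure.real, div_eq_inv_mul]

instance isProbabilityMeasure_uniformOn_Icc_one (n : ℕ) [NeZero n] :
    IsProbabilityMeasure (uniformOn (Set.Icc 1 n)) :=
  isProbabilityMeasure_uniformOn (Set.finite_Icc 1 n)
    ⟨1, Set.mem_Icc.2 ⟨le_rfl, NeZero.one_le⟩⟩

instance isProbabilityMeasure_unifVec (n : ℕ) [NeZero n] : IsProbabilityMeasure (unifVec n) := by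
  unfold unifVec
  infer_instance

lemma ae_mem_uniformOn_Icc_one (n : ℕ) :
    ∀ᵐ x ∂(uniformOn (Set.Icc 1 n)), x ∈ Finset.Ioc 0 n := by
  filter_upwards [ae_cond_mem (μ := (Measure.count : Measure ℕ))
    (measurableSet_Icc : MeasurableSet (Set.Icc 1 n))] with x hx
  exact Finset.mem_Ioc.2 hx

lemma ae_mem_unifVec (n : ℕ) [NeZero n] :
    ∀ᵐ ω ∂(unifVec n), ∀ i, ω i ∈ Finset.Ioc 0 n :=
  ae_all_iff.2 fun i => (Measure.quasiMeasurePreserving_eval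
    (μ := fun _ : Fin n => uniformOn (Set.Icc 1 n)) i).ae (ae_mem_uniformOn_Icc_one n)

lemma memLp_of_ae_mem_finset {α E : Type*} [MeasurableSpace α] [NormedAddCommGroup E]
    {ν : Measure α} [IsFiniteMeasure ν] {s : Finset α} (hs : ∀ᵐ x ∂ν, x ∈ s) {f : α → E}
    (hf : AEStronglyMeasurable f ν) (p : ENNReal) : MemLp f p ν := by
  refine MemLp.of_bound hf (∑ x ∈ s, ‖f x‖) ?_
  filter_upwards [hs] with x hx
  exact Finset.single_le_sum (f := fun x => ‖f x‖) (fun _ _ => norm_nonneg _) hx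

lemma integrable_unifVec (n : ℕ) [NeZero n] (f : (Fin n → ℕ) → ℝ) :
    Integrable f (unifVec n) :=
  memLp_one_iff_integrable.1 <| memLp_of_ae_mem_finset
    (s := Fintype.piFinset fun _ => Finset.Ioc 0 n)
    (by simpa only [Fintype.mem_piFinset] using ae_mem_unifVec n)
    Measurable.of_discrete.aestronglyMeasurable 1

lemma integral_sq_average_sub {Ω ι : Type*} [MeasurableSpace Ω] [Fintype ι] [Nonempty ι]
    {ν : Measure Ω} [IsProbabilityMeasure ν] {Y : Ω → ℝ} (hY : MemLp Y 2 ν) (a : ℝ) :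
    ∫ ω : ι → Ω, ((∑ i, Y (ω i)) / Fintype.card ι - a) ^ 2 ∂(Measure.pi fun _ => ν)
      = Var[Y; ν] / Fintype.card ι + (∫ x, Y x ∂ν - a) ^ 2 := by
  have hcoord (i : ι) : MemLp (fun ω : ι → Ω => Y (ω i)) 2 (Measure.pi fun _ => ν) :=
    hY.comp_measurePreserving (measurePreserving_eval (fun _ : ι => ν) i)
  have havg : MemLp (fun ω : ι → Ω => (∑ i, Y (ω i)) / Fintype.card ι) 2
      (Measure.pi fun _ => ν) := by
    simpa only [div_eq_mul_inv] using (memLp_finsetSum _ fun i _ => hcoord i).mul_const _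
  have hcard : (Fintype.card ι : ℝ) ≠ 0 := Nat.cast_ne_zero.2 Fintype.card_ne_zero
  have hmean : ∫ ω : ι → Ω, (∑ i, Y (ω i)) / Fintype.card ι ∂(Measure.pi fun _ => ν)
      = ∫ x, Y x ∂ν := by
    rw [integral_div, integral_finsetSum _ fun i _ => (hcoord i).integrable one_le_two]
    simp_rw [integral_comp_eval (μ := fun _ : ι => ν) hY.aestronglyMeasurable]
    rw [Finset.sum_const, Finset.card_univ, nsmul_eq_mul, mul_div_cancel_left₀ _ hcard]
  have hvar : Var[fun ω : ι → Ω => (∑ i, Y (ω i)) / Fintype.card ι; Measure.pi fun _ => ν]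
      = Var[Y; ν] / Fintype.card ι := by
    have hsum := variance_sum_pi (μ := fun _ : ι => ν) (X := fun _ => Y) fun _ => hY
    simp_rw [div_eq_inv_mul, variance_const_mul]
    rw [← Finset.sum_fn, hsum, Finset.sum_const, Finset.card_univ, nsmul_eq_mul]
    field_simp
  have hshift := variance_eq_sub (havg.sub (memLp_const a))
  have hconst := variance_sub_const havg.aestronglyMeasurable a
  simp only [Pi.pow_apply, Pi.sub_apply] at hshift
  rw [integral_sub (havg.integrable one_le_two) (integrable_const a), hmean, integral_const,
    probReal_univ, one_smul] at hshift
  rw [← hvar, ← hconst]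
  exact sub_eq_iff_eq_add.1 hshift.symm

lemma integral_sq_divisibleFraction_sub_le {n k : ℕ} [NeZero n] (hk : k ∈ Finset.Ioc 0 n) :
    ∫ ω, (divisibleFraction k ω - 1 / (k : ℝ)) ^ 2 ∂(unifVec n) ≤ 2 / (n : ℝ) * (1 / k) := by
  obtain ⟨hk0, hkn⟩ := Finset.mem_Ioc.1 hk
  have hn : (0 : ℝ) < n := Nat.cast_pos.2 (NeZero.pos n)
  set Y : ℕ → ℝ := fun x => if k ∣ x then 1 else 0 with hYdef
  have hYm : AEStronglyMeasurable Y (uniformOn (Set.Icc 1 n)) :=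
    Measurable.of_discrete.aestronglyMeasurable
  have hmean : ∫ x, Y x ∂(uniformOn (Set.Icc 1 n)) = ((n / k : ℕ) : ℝ) / n := by
    rw [integral_uniformOn_Icc_one, sum_Ioc_ite_dvd]
  have hvar : Var[Y; uniformOn (Set.Icc 1 n)] ≤ 1 / k := by
    have hsq : Y ^ 2 = Y := by
      ext x
      simp only [hYdef, Pi.pow_apply, ite_pow, one_pow, zero_pow two_ne_zero]
    refine (variance_le_expectation_sq hYm).trans ?_
    rw [hsq, hmean, div_le_iff₀ (by positivity), one_div_mul_eq_div]
    exact Nat.cast_div_le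
  have hbias : (∫ x, Y x ∂(uniformOn (Set.Icc 1 n)) - 1 / k) ^ 2 ≤ 1 / n * (1 / k) := by
    rw [hmean, ← sq_abs, sq]
    have hround := abs_natDiv_div_sub_le (NeZero.ne n) hk0.ne'
    have hle : (1 : ℝ) / n ≤ 1 / k :=
      one_div_le_one_div_of_le (by positivity) (Nat.cast_le.2 hkn)
    exact mul_le_mul hround (hround.trans hle) (abs_nonneg _) (by positivity)
  have hmoment := integral_sq_average_sub (ι := Fin n)
    (memLp_of_ae_mem_finset (ae_mem_uniformOn_Icc_one n) hYm 2) (1 / k : ℝ)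
  rw [Fintype.card_fin] at hmoment
  calc ∫ ω, (divisibleFraction k ω - 1 / (k : ℝ)) ^ 2 ∂(unifVec n)
      = Var[Y; uniformOn (Set.Icc 1 n)] / n
        + (∫ x, Y x ∂(uniformOn (Set.Icc 1 n)) - 1 / k) ^ 2 := hmoment
    _ ≤ 1 / k / n + 1 / n * (1 / k) := by gcongr
    _ = 2 / n * (1 / k) := by ring

/-! ### A central limit theorem for bounded triangular arrays -/

section TriangularArray

lemma charFun_map_const_mul_sum_pi {ι Ω : Type*} [Fintype ι] [MeasurableSpace Ω] {ν : Measure Ω}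
    [IsProbabilityMeasure ν] {Y : Ω → ℝ} (hY : Measurable Y) (c t : ℝ) :
    charFun ((Measure.pi fun _ : ι => ν).map fun ω => c * ∑ i, Y (ω i)) t
      = charFun (ν.map Y) (c * t) ^ Fintype.card ι := by
  have hsum : Measurable fun ω : ι → Ω => c * ∑ i, Y (ω i) := by fun_prop
  rw [charFun_apply_real, charFun_apply_real, integral_map hsum.aemeasurable (by fun_prop),
    integral_map (by fun_prop) (by fun_prop), ← integral_fintype_prod_eq_pow]
  refine integral_congr_ae (.of_forall fun ω => ?_)
  simp only [← Complex.exp_sum]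
  congr 1
  push_cast
  rw [← Finset.sum_mul, ← Finset.mul_sum]
  ring

lemma norm_exp_mul_I_sub_quadratic_le {x b : ℝ} (hx : |x| ≤ b) :
    ‖Complex.exp (x * Complex.I) - (1 + x * Complex.I - (x : ℂ) ^ 2 / 2)‖ ≤ b ^ 3 * rexp b := by
  have hbound := Complex.norm_exp_sub_sum_le_norm_mul_exp (x * Complex.I) 3
  have hsum : ∑ m ∈ Finset.range 3, (x * Complex.I) ^ m / (m.factorial : ℂ)
      = 1 + x * Complex.I - (x : ℂ) ^ 2 / 2 := by
    simp only [Finset.sum_range_succ, Finset.sum_range_zero, mul_pow, Complex.I_sq, pow_zero,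
      pow_one, Nat.factorial, Nat.cast_one]
    push_cast
    ring
  rw [hsum, norm_mul, Complex.norm_I, mul_one, Complex.norm_real, Real.norm_eq_abs] at hbound
  exact hbound.trans <| mul_le_mul (pow_le_pow_left₀ (abs_nonneg x) hx 3) (exp_le_exp.2 hx)
    (exp_pos _).le (pow_nonneg ((abs_nonneg x).trans hx) 3)

lemma norm_charFun_map_sub_quadratic_le {Ω : Type*} [MeasurableSpace Ω] {ν : Measure Ω}
    [IsProbabilityMeasure ν] {Y : Ω → ℝ} (hY : Measurable Y) {B : ℝ} (hB : ∀ x, |Y x| ≤ B)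
    (h : ℝ) :
    ‖charFun (ν.map Y) h
        - (1 + h * (∫ x, Y x ∂ν : ℝ) * Complex.I - (h : ℂ) ^ 2 * (∫ x, Y x ^ 2 ∂ν : ℝ) / 2)‖
      ≤ (|h| * B) ^ 3 * rexp (|h| * B) := by
  have hYint : Integrable Y ν := .of_bound hY.aestronglyMeasurable B (.of_forall hB)
  have hY2int : Integrable (fun x => Y x ^ 2) ν :=
    .of_bound (hY.pow_const 2).aestronglyMeasurable (B ^ 2) <| .of_forall fun x => by
      rw [norm_pow]
      exact pow_le_pow_left₀ (norm_nonneg _) (hB x) 2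
  have hexpint : Integrable (fun x => Complex.exp (h * Y x * Complex.I)) ν :=
    .of_bound (by fun_prop) 1 <| .of_forall fun x => by
      rw [← Complex.ofReal_mul, Complex.norm_exp_ofReal_mul_I]
  have hlin : Integrable (fun x => (h : ℂ) * Y x * Complex.I) ν :=
    (hYint.ofReal.const_mul _).mul_const _
  have hquad : Integrable (fun x => (h : ℂ) ^ 2 * (Y x ^ 2 : ℝ) / 2) ν :=
    (hY2int.ofReal.const_mul _).div_const _
  have haffine : Integrable (fun x => 1 + (h : ℂ) * Y x * Complex.I) ν :=
    (integrable_const 1).add hlin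
  have hpoly : Integrable
      (fun x => 1 + (h : ℂ) * Y x * Complex.I - (h : ℂ) ^ 2 * (Y x ^ 2 : ℝ) / 2) ν :=
    haffine.sub hquad
  have hdiff : charFun (ν.map Y) h
      - (1 + h * (∫ x, Y x ∂ν : ℝ) * Complex.I - (h : ℂ) ^ 2 * (∫ x, Y x ^ 2 ∂ν : ℝ) / 2)
      = ∫ x, (Complex.exp (h * Y x * Complex.I)
        - (1 + h * Y x * Complex.I - (h : ℂ) ^ 2 * (Y x ^ 2 : ℝ) / 2)) ∂ν := by
    rw [integral_sub hexpint hpoly, integral_sub haffine hquad,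
      integral_add (integrable_const 1) hlin, integral_div, integral_const_mul,
      integral_mul_const, integral_const_mul, integral_complex_ofReal, integral_complex_ofReal,
      integral_const, probReal_univ, one_smul, charFun_apply_real,
      integral_map (by fun_prop) (by fun_prop)]
  rw [hdiff]
  refine (norm_integral_le_of_norm_le_const (.of_forall fun x => ?_)).trans_eq
    (by rw [probReal_univ, mul_one])
  have hle : |h * Y x| ≤ |h| * B := by
    rw [abs_mul]
    exact mul_le_mul_of_nonneg_left (hB x) (abs_nonneg h)
  simpa only [Complex.ofReal_mul, Complex.ofReal_pow, mul_pow] using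
    norm_exp_mul_I_sub_quadratic_le hle

variable {Ω : ℕ → Type*} [∀ n, MeasurableSpace (Ω n)] {ν : ∀ n, Measure (Ω n)}
  [∀ n, IsProbabilityMeasure (ν n)] {Y : ∀ n, Ω n → ℝ} {B v : ℝ}

lemma tendsto_sq_mul_charFun_map_sub_one {r : ℕ → ℝ} (hr : Tendsto r atTop atTop)
    (hY : ∀ n, Measurable (Y n)) (hB : ∀ n x, |Y n x| ≤ B)
    (hmean : Tendsto (fun n => r n * ∫ x, Y n x ∂(ν n)) atTop (𝓝 0))
    (hsq : Tendsto (fun n => ∫ x, Y n x ^ 2 ∂(ν n)) atTop (𝓝 v)) (t : ℝ) :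
    Tendsto (fun n => (r n : ℂ) ^ 2 * (charFun ((ν n).map (Y n)) ((r n)⁻¹ * t) - 1)) atTop
      (𝓝 (-((v * t ^ 2 / 2 : ℝ) : ℂ))) := by
  set m : ℕ → ℝ := fun n => ∫ x, Y n x ∂(ν n)
  set q : ℕ → ℝ := fun n => ∫ x, Y n x ^ 2 ∂(ν n)
  have hinv : Tendsto (fun n => (r n)⁻¹) atTop (𝓝 0) := tendsto_inv_atTop_zero.comp hr
  have hmain : Tendsto
      (fun n => ((r n * m n * t : ℝ) : ℂ) * Complex.I - ((q n * t ^ 2 / 2 : ℝ) : ℂ)) atTop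
      (𝓝 (-((v * t ^ 2 / 2 : ℝ) : ℂ))) := by
    have hlin : Tendsto (fun n => ((r n * m n * t : ℝ) : ℂ) * Complex.I) atTop (𝓝 0) := by
      simpa only [zero_mul, Complex.ofReal_zero] using
        (hmean.mul_const t).ofReal.mul_const Complex.I
    simpa only [zero_sub] using hlin.sub ((hsq.mul_const (t ^ 2)).div_const 2).ofReal
  have herror : Tendsto (fun n => (r n)⁻¹ * ((|t| * B) ^ 3 * rexp ((r n)⁻¹ * (|t| * B)))) atTop
      (𝓝 0) := by
    have hexp := (hinv.mul_const (|t| * B)).rexp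
    simpa only [zero_mul] using hinv.mul (hexp.const_mul ((|t| * B) ^ 3))
  refine hmain.congr_dist (squeeze_zero' (.of_forall fun _ => dist_nonneg) ?_ herror)
  filter_upwards [hr.eventually_gt_atTop 0] with n hn
  have hrn : (r n : ℂ) ≠ 0 := Complex.ofReal_ne_zero.2 hn.ne'
  have habs : |(r n)⁻¹ * t| = (r n)⁻¹ * |t| := by rw [abs_mul, abs_of_pos (inv_pos.2 hn)]
  have hquad := norm_charFun_map_sub_quadratic_le (ν := ν n) (hY n) (hB n) ((r n)⁻¹ * t)
  calc dist (((r n * m n * t : ℝ) : ℂ) * Complex.I - ((q n * t ^ 2 / 2 : ℝ) : ℂ))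
        ((r n : ℂ) ^ 2 * (charFun ((ν n).map (Y n)) ((r n)⁻¹ * t) - 1))
      = r n ^ 2 * ‖charFun ((ν n).map (Y n)) ((r n)⁻¹ * t)
          - (1 + ((r n)⁻¹ * t : ℝ) * (m n) * Complex.I
            - (((r n)⁻¹ * t : ℝ) : ℂ) ^ 2 * (q n) / 2)‖ := by
        rw [dist_comm, dist_eq_norm, ← Complex.norm_of_nonneg (sq_nonneg (r n)), ← norm_mul]
        congr 1
        push_cast
        field_simp
        ring
    _ ≤ r n ^ 2 * ((|(r n)⁻¹ * t| * B) ^ 3 * rexp (|(r n)⁻¹ * t| * B)) := by gcongr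
    _ = (r n)⁻¹ * ((|t| * B) ^ 3 * rexp ((r n)⁻¹ * (|t| * B))) := by
        rw [habs, mul_assoc (r n)⁻¹]
        field_simp

lemma tendstoInDistribution_inv_sqrt_mul_sum_pi (hY : ∀ n, Measurable (Y n))
    (hB : ∀ n x, |Y n x| ≤ B)
    (hmean : Tendsto (fun n : ℕ => √(n + 1 : ℕ) * ∫ x, Y n x ∂(ν n)) atTop (𝓝 0))
    (hsq : Tendsto (fun n => ∫ x, Y n x ^ 2 ∂(ν n)) atTop (𝓝 v)) :
    TendstoInDistribution
      (fun n (ω : Fin (n + 1) → Ω n) => (√(n + 1 : ℕ))⁻¹ * ∑ i, Y n (ω i)) atTop id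
      (fun n => Measure.pi fun _ => ν n) (gaussianReal 0 v.toNNReal) where
  forall_aemeasurable n :=
    (measurable_const.mul (by fun_prop)).aemeasurable
  tendsto := by
    have hv : 0 ≤ v := ge_of_tendsto' hsq fun n => integral_nonneg fun x => sq_nonneg _
    have hr : Tendsto (fun n : ℕ => √(n + 1 : ℕ)) atTop atTop :=
      tendsto_sqrt_atTop.comp (tendsto_natCast_atTop_atTop.comp (tendsto_add_atTop_nat 1))
    refine ProbabilityMeasure.tendsto_iff_tendsto_charFun.2 fun t => ?_
    set φ : ℕ → ℂ := fun n => charFun ((ν n).map (Y n)) ((√(n + 1 : ℕ))⁻¹ * t)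
    have hφ : Tendsto (fun n : ℕ => (n : ℂ) * (φ (n - 1) - 1)) atTop
        (𝓝 (-((v * t ^ 2 / 2 : ℝ) : ℂ))) := by
      refine (tendsto_add_atTop_iff_nat 1).1
        ((tendsto_sq_mul_charFun_map_sub_one hr hY hB hmean hsq t).congr fun n => ?_)
      rw [← Complex.ofReal_pow, sq_sqrt (Nat.cast_nonneg _), Complex.ofReal_natCast]
      rfl
    have hpow := (tendsto_add_atTop_iff_nat 1).2 (Complex.tendsto_one_add_pow_exp_of_tendsto hφ)
    convert hpow using 1
    · ext n
      simp [φ, charFun_map_const_mul_sum_pi (hY n)]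
    · simp [charFun_gaussianReal, hv]

end TriangularArray

lemma tendstoInDistribution_of_tendsto_integral_dist {ι E Ω' : Type*} {Ω : ι → Type*}
    [∀ i, MeasurableSpace (Ω i)] [MeasurableSpace Ω'] [PseudoMetricSpace E] [MeasurableSpace E]
    [OpensMeasurableSpace E] {P : ∀ i, Measure (Ω i)} [∀ i, IsProbabilityMeasure (P i)]
    {P' : Measure Ω'} [IsProbabilityMeasure P'] {l : Filter ι} [l.IsCountablyGenerated]
    {X Y : ∀ i, Ω i → E} {Z : Ω' → E} (hX : TendstoInDistribution X l Z P P')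
    (hY : ∀ i, AEMeasurable (Y i) (P i))
    (hint : ∀ i, Integrable (fun ω => dist (Y i ω) (X i ω)) (P i))
    (hdist : Tendsto (fun i => ∫ ω, dist (Y i ω) (X i ω) ∂(P i)) l (𝓝 0)) :
    TendstoInDistribution Y l Z P P' where
  forall_aemeasurable := hY
  aemeasurable_limit := hX.aemeasurable_limit
  tendsto := by
    refine tendsto_iff_forall_lipschitz_integral_tendsto.2 ?_
    rintro f ⟨C, hC⟩ ⟨L, hL⟩
    have hf : Measurable f := hL.continuous.measurable
    have hfint (i : ι) {W : Ω i → E} (hW : AEMeasurable W (P i)) :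
        Integrable (fun ω => f (W ω)) (P i) :=
      ((mkOfBound ⟨f, hL.continuous⟩ C hC).integrable ((P i).map W)).comp_aemeasurable hW
    refine (tendsto_iff_forall_lipschitz_integral_tendsto.1 hX.tendsto f ⟨C, hC⟩
      ⟨L, hL⟩).congr_dist ?_
    refine squeeze_zero (fun _ => dist_nonneg) (fun i => ?_)
      (by simpa only [mul_zero] using hdist.const_mul (L : ℝ))
    change dist (∫ x, f x ∂((P i).map (X i))) (∫ x, f x ∂((P i).map (Y i))) ≤ _
    rw [integral_map (hX.forall_aemeasurable i) hf.aestronglyMeasurable,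
      integral_map (hY i) hf.aestronglyMeasurable, dist_comm, dist_eq_norm,
      ← integral_sub (hfint i (hY i)) (hfint i (hX.forall_aemeasurable i)), ← integral_const_mul]
    exact norm_integral_le_of_norm_le ((hint i).const_mul _)
      (.of_forall fun ω => hL.dist_le_mul _ _)

/-! ### The limit law -/

lemma tendsto_sqrt_mul_integral_jordanRatio_sub {s : ℕ} (hs : s ≠ 0) :
    Tendsto (fun n : ℕ => √n * ∫ x, (jordanRatio s x - coprimeDensity (s + 1))
      ∂(uniformOn (Set.Icc 1 n))) atTop (𝓝 0) := by
  refine squeeze_zero_norm' (a := fun n : ℕ => 2 * ((harmonic n : ℝ) / √n)) ?_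
    (by simpa only [mul_zero] using tendsto_harmonic_div_sqrt_atTop.const_mul 2)
  filter_upwards [eventually_ne_atTop 0] with n hn
  have hn0 : (0 : ℝ) < n := Nat.cast_pos.2 (Nat.pos_of_ne_zero hn)
  have hmean : ∫ x, (jordanRatio s x - coprimeDensity (s + 1)) ∂(uniformOn (Set.Icc 1 n))
      = (∑ x ∈ Finset.Ioc 0 n, jordanRatio s x) / n - coprimeDensity (s + 1) := by
    rw [integral_uniformOn_Icc_one, Finset.sum_sub_distrib, Finset.sum_const, Nat.card_Ioc,
      Nat.sub_zero, nsmul_eq_mul, sub_div, mul_div_cancel_left₀ _ hn0.ne']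
  rw [hmean, norm_mul, Real.norm_eq_abs, Real.norm_eq_abs, abs_of_nonneg (Real.sqrt_nonneg _)]
  calc √n * |(∑ x ∈ Finset.Ioc 0 n, jordanRatio s x) / n - coprimeDensity (s + 1)|
      ≤ √n * (2 * (harmonic n : ℝ) / n) := by
        gcongr
        exact abs_sum_jordanRatio_div_sub_le hs hn
    _ = 2 * ((harmonic n : ℝ) / √n) := by
        nth_rw 2 [← Real.mul_self_sqrt hn0.le]
        field_simp

lemma tendsto_integral_sq_jordanRatio_sub {s : ℕ} (hs : s ≠ 0) :
    Tendsto (fun n : ℕ => ∫ x, (jordanRatio s x - coprimeDensity (s + 1)) ^ 2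
      ∂(uniformOn (Set.Icc 1 n))) atTop
      (𝓝 (∏' p : Nat.Primes, (1 - 2 / (p : ℝ) ^ (s + 1) + 1 / (p : ℝ) ^ (2 * s + 1))
        - coprimeDensity (s + 1) ^ 2)) := by
  have hlim := ((tendsto_sum_jordanRatio_sq_div hs).sub
    ((tendsto_sum_jordanRatio_div hs).const_mul (2 * coprimeDensity (s + 1)))).add_const
      (coprimeDensity (s + 1) ^ 2)
  convert hlim.congr' ?_ using 2
  · ring
  filter_upwards [eventually_ne_atTop 0] with n hn
  have hn0 : (n : ℝ) ≠ 0 := Nat.cast_ne_zero.2 hn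
  simp_rw [integral_uniformOn_Icc_one, sub_sq, Finset.sum_add_distrib, Finset.sum_sub_distrib,
    mul_right_comm (2 : ℝ) _ (coprimeDensity (s + 1)), ← Finset.mul_sum, Finset.sum_const,
    Nat.card_Ioc, Nat.sub_zero, nsmul_eq_mul]
  field_simp

lemma tendstoInDistribution_inv_sqrt_mul_sum_jordanRatio {s : ℕ} (hs : s ≠ 0) :
    TendstoInDistribution
      (fun n (ω : Fin (n + 1) → ℕ) =>
        (√(n + 1 : ℕ))⁻¹ * ∑ i, (jordanRatio s (ω i) - coprimeDensity (s + 1)))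
      atTop id (fun n => unifVec (n + 1))
      (gaussianReal 0 (Real.toNNReal
        (∏' p : Nat.Primes, (1 - 2 / (p : ℝ) ^ (s + 1) + 1 / (p : ℝ) ^ (2 * s + 1))
          - coprimeDensity (s + 1) ^ 2))) := by
  refine tendstoInDistribution_inv_sqrt_mul_sum_pi
    (ν := fun n => uniformOn (Set.Icc 1 (n + 1)))
    (Y := fun _ x => jordanRatio s x - coprimeDensity (s + 1))
    (B := 1 + |coprimeDensity (s + 1)|) (fun _ => .of_discrete) (fun _ x => ?_)
    ((tendsto_add_atTop_iff_nat 1).2 (tendsto_sqrt_mul_integral_jordanRatio_sub hs))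
    ((tendsto_add_atTop_iff_nat 1).2 (tendsto_integral_sq_jordanRatio_sub hs))
  obtain ⟨hnonneg, hle⟩ := jordanRatio_mem_Icc s x
  refine (abs_sub _ _).trans (add_le_add_left ?_ _)
  rwa [abs_of_nonneg hnonneg]

lemma integral_abs_coprimeFraction_sub_linearization_le {s n : ℕ} [NeZero n] (hs : s ≠ 0) :
    ∫ ω, |coprimeFraction (s + 1) ω - coprimeDensity (s + 1)
        - (s + 1) * ((∑ i, jordanRatio s (ω i)) / n - coprimeDensity (s + 1))| ∂(unifVec n)
      ≤ (s + 1) ^ 2 * ((harmonic n : ℝ) / n) := by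
  calc _ ≤ ∫ ω, ((s : ℝ) / n + s * (s + 1) / 2
          * ∑ k ∈ Finset.Ioc 0 n, (divisibleFraction k ω - 1 / (k : ℝ)) ^ 2) ∂(unifVec n) := by
        refine integral_mono_ae (integrable_unifVec n _) (integrable_unifVec n _) ?_
        filter_upwards [ae_mem_unifVec n] with ω hω
        exact abs_coprimeFraction_sub_linearization_le hs (NeZero.ne n) hω
    _ = s / n + s * (s + 1) / 2 * ∑ k ∈ Finset.Ioc 0 n,
          ∫ ω, (divisibleFraction k ω - 1 / (k : ℝ)) ^ 2 ∂(unifVec n) := by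
        rw [integral_add (integrable_unifVec n _) (integrable_unifVec n _), integral_const,
          probReal_univ, one_smul, integral_const_mul,
          integral_finsetSum _ fun k _ => integrable_unifVec n _]
    _ ≤ s / n * harmonic n + s * (s + 1) / 2 * (2 / n * harmonic n) := by
        rw [← sum_Ioc_one_div_eq_harmonic, Finset.mul_sum (a := 2 / (n : ℝ))]
        gcongr with k hk
        · rw [sum_Ioc_one_div_eq_harmonic]
          exact le_mul_of_one_le_right (by positivity) (one_le_harmonic (NeZero.ne n))
        · exact integral_sq_divisibleFraction_sub_le hk
    _ = (s * (s + 2)) * ((harmonic n : ℝ) / n) := by ring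
    _ ≤ (s + 1) ^ 2 * ((harmonic n : ℝ) / n) := by
        have hharmonic : 0 ≤ (harmonic n : ℝ) := zero_le_one.trans (one_le_harmonic (NeZero.ne n))
        gcongr
        linarith

lemma tendstoInDistribution_sqrt_div_mul_coprimeFraction_sub {s : ℕ} (hs : s ≠ 0) :
    TendstoInDistribution
      (fun n (ω : Fin (n + 1) → ℕ) =>
        √(n + 1 : ℕ) / (s + 1) * (coprimeFraction (s + 1) ω - coprimeDensity (s + 1)))
      atTop id (fun n => unifVec (n + 1))
      (gaussianReal 0 (Real.toNNReal
        (∏' p : Nat.Primes, (1 - 2 / (p : ℝ) ^ (s + 1) + 1 / (p : ℝ) ^ (2 * s + 1))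
          - coprimeDensity (s + 1) ^ 2))) := by
  refine tendstoInDistribution_of_tendsto_integral_dist
    (tendstoInDistribution_inv_sqrt_mul_sum_jordanRatio hs)
    (fun _ => Measurable.of_discrete.aemeasurable) (fun _ => integrable_unifVec _ _) ?_
  have hbound : Tendsto (fun n : ℕ => (s + 1) * ((harmonic (n + 1) : ℝ) / √(n + 1 : ℕ))) atTop
      (𝓝 0) := by
    simpa only [mul_zero] using
      ((tendsto_add_atTop_iff_nat 1).2 tendsto_harmonic_div_sqrt_atTop).const_mul (s + 1 : ℝ)
  refine squeeze_zero (fun _ => integral_nonneg fun _ => dist_nonneg) (fun n => ?_) hbound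
  set N := n + 1
  have hN0 : (0 : ℝ) < N := Nat.cast_pos.2 n.succ_pos
  have hsqrt : √N / N = (√N)⁻¹ := Real.sqrt_div_self
  have hdist (ω : Fin N → ℕ) :
      dist (√N / (s + 1) * (coprimeFraction (s + 1) ω - coprimeDensity (s + 1)))
        ((√N)⁻¹ * ∑ i, (jordanRatio s (ω i) - coprimeDensity (s + 1)))
      = √N / (s + 1) * |coprimeFraction (s + 1) ω - coprimeDensity (s + 1)
        - (s + 1) * ((∑ i, jordanRatio s (ω i)) / N - coprimeDensity (s + 1))| := by
    rw [Real.dist_eq, ← abs_of_nonneg (by positivity : 0 ≤ √N / (s + 1)), ← abs_mul,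
      abs_of_nonneg (by positivity : 0 ≤ √N / (s + 1)), ← hsqrt, Finset.sum_sub_distrib,
      Fin.sum_const, nsmul_eq_mul]
    congr 1
    field_simp
  simp_rw [hdist]
  rw [integral_const_mul]
  calc _ ≤ √N / (s + 1) * ((s + 1) ^ 2 * ((harmonic N : ℝ) / N)) := by
        gcongr
        exact integral_abs_coprimeFraction_sub_linearization_le hs
    _ = (s + 1) * ((√N / N) * harmonic N) := by field_simp
    _ = (s + 1) * ((harmonic N : ℝ) / √N) := by rw [hsqrt, inv_mul_eq_div]

lemma normalized_coprime_count_eq {s n : ℕ} (hn : n ≠ 0) (ω : Fin n → ℕ) :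
    (1 / (((s + 1 : ℕ) : ℝ) * (n : ℝ) ^ ((2 * ((s + 1 : ℕ) : ℝ) - 1) / 2))) *
        ((∑ i : Fin (s + 1) → Fin n,
            if Finset.univ.gcd (fun t : Fin (s + 1) => ω (i t)) = 1 then (1 : ℝ) else 0)
          - (n : ℝ) ^ (s + 1) * ∏' p : Nat.Primes, (1 - 1 / (p : ℝ) ^ (s + 1)))
      = √n / (s + 1) * (coprimeFraction (s + 1) ω - coprimeDensity (s + 1)) := by
  have hn0 : (0 : ℝ) < n := Nat.cast_pos.2 (Nat.pos_of_ne_zero hn)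
  have hpow : (n : ℝ) ^ (s + 1) = √n * (n : ℝ) ^ ((2 * ((s + 1 : ℕ) : ℝ) - 1) / 2) := by
    rw [Real.sqrt_eq_rpow, ← Real.rpow_natCast, ← Real.rpow_add hn0]
    congr 1
    push_cast
    ring
  have hsqrt : √(n : ℝ) ≠ 0 := (Real.sqrt_pos.2 hn0).ne'
  have hrpow := (Real.rpow_pos_of_pos hn0 ((2 * ((s + 1 : ℕ) : ℝ) - 1) / 2)).ne'
  rw [coprimeFraction, coprimeDensity, hpow]
  push_cast at hrpow ⊢
  field_simp

/-- For `d ≥ 2`, the normalized count of coprime `d`-tuples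
`(1/(d n^{(2d−1)/2}))(∑_{1≤i₁,…,i_d≤n} 1_{gcd(X_{i₁},…,X_{i_d})=1} − n^d ∏_p (1−1/p^d))`
converges in distribution to `N(0, ∏_p (1−2/p^d+1/p^{2d−1}) − (∏_p (1−1/p^d))²)`;
convergence in distribution is stated as convergence of integrals of every
bounded continuous test function. -/
theorem clt_coprime_tuples (d : ℕ) (hd : 2 ≤ d) :
    ∀ g : ℝ →ᵇ ℝ,
      Tendsto
        (fun n : ℕ =>
          ∫ ω, g ((1 / ((d : ℝ) * (n : ℝ) ^ ((2 * (d : ℝ) - 1) / 2))) *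
              ((∑ i : Fin d → Fin n,
                  if Finset.univ.gcd (fun t : Fin d => ω (i t)) = 1 then (1 : ℝ) else 0)
                - (n : ℝ) ^ d * ∏' p : Nat.Primes, (1 - 1 / (p : ℝ) ^ d))) ∂(unifVec n))
        atTop
        (nhds (∫ x, g x
          ∂(gaussianReal 0 (Real.toNNReal
              (∏' p : Nat.Primes, (1 - 2 / (p : ℝ) ^ d + 1 / (p : ℝ) ^ (2 * d - 1))
                - (∏' p : Nat.Primes, (1 - 1 / (p : ℝ) ^ d)) ^ 2))))) := by
  intro g
  obtain ⟨s, rfl⟩ : ∃ s, d = s + 1 := ⟨d - 1, by lia⟩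
  have hs : s ≠ 0 := by lia
  have hclt := ProbabilityMeasure.tendsto_iff_forall_integral_tendsto.1
    (tendstoInDistribution_sqrt_div_mul_coprimeFraction_sub hs).tendsto g
  rw [← tendsto_add_atTop_iff_nat 1, show 2 * (s + 1) - 1 = 2 * s + 1 by lia]
  convert hclt using 2 with n
  · refine Eq.trans ?_ (integral_map Measurable.of_discrete.aemeasurable
      g.continuous.aestronglyMeasurable).symm
    simp_rw [normalized_coprime_count_eq n.succ_ne_zero]
  · exact congrArg (∫ x, g x ∂·) Measure.map_id.symm
end
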